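/- Let A be a finite algebra. Then every supernilpotent congruence of A (i.e., every α with [α,…,α]_n = 0_A for some n ≥ 2) is solvable. Consequently, if A is a finite supernilpotent algebra possessing a Taylor term, then A possesses a Mal'cev term and is nilpotent. -/

import Mathlib

set_option autoImplicit false

namespace UA

/-- A signature: a type of operation symbols, each with a finite arity. -/
structure Signature : Type 1 where
  ops : Type
  arity : ops → ℕ

/-- An algebra for a signature: a carrier set together with an interpretation
of every operation symbol. -/
structure Algebra (σ : Signature) : Type 1 where
  carrier : Type
  interp : (o : σ.ops) → (Fin (σ.arity o) → carrier) → carrier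

variable {σ : Signature}

/-- A congruence of an algebra: an equivalence relation compatible with all
basic operations. -/
structure Con (A : Algebra σ) : Type where
  r : A.carrier → A.carrier → Prop
  refl : ∀ a, r a a
  symm : ∀ {a b}, r a b → r b a
  trans : ∀ {a b c}, r a b → r b c → r a c
  compat : ∀ (o : σ.ops) (x y : Fin (σ.arity o) → A.carrier),
      (∀ i, r (x i) (y i)) → r (A.interp o x) (A.interp o y)

namespace Con

variable {A : Algebra σ}

instance : LE (Con A) := ⟨fun c d => ∀ a b : A.carrier, c.r a b → d.r a b⟩
instance : LT (Con A) := ⟨fun c d => c ≤ d ∧ ¬ d ≤ c⟩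

/-- The total congruence `1_A`. -/
def top : Con A where
  r := fun _ _ => True
  refl := fun _ => trivial
  symm := fun _ => trivial
  trans := fun _ _ => trivial
  compat := fun _ _ _ _ => trivial

/-- The identity congruence `0_A`. -/
def bot : Con A where
  r := fun a b => a = b
  refl := fun _ => rfl
  symm := fun h => h.symm
  trans := fun h h' => h.trans h'
  compat := fun o _ _ h => congrArg (A.interp o) (funext h)

/-- Meet of an arbitrary family of congruences (intersection). -/
def sInf (S : Set (Con A)) : Con A where
  r a b := ∀ c ∈ S, c.r a b
  refl a c _ := c.refl a
  symm h c hc := c.symm (h c hc)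
  trans h h' c hc := c.trans (h c hc) (h' c hc)
  compat o x y h c hc := c.compat o x y (fun i => h i c hc)

/-- Binary meet of congruences. -/
def inf (c d : Con A) : Con A where
  r a b := c.r a b ∧ d.r a b
  refl a := ⟨c.refl a, d.refl a⟩
  symm h := ⟨c.symm h.1, d.symm h.2⟩
  trans h h' := ⟨c.trans h.1 h'.1, d.trans h.2 h'.2⟩
  compat o x y h := ⟨c.compat o x y fun i => (h i).1, d.compat o x y fun i => (h i).2⟩

/-- The congruence generated by a set of pairs. -/
def conGen (S : Set (A.carrier × A.carrier)) : Con A :=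
  sInf {c : Con A | ∀ p ∈ S, c.r p.1 p.2}

/-- Binary join of congruences. -/
def sup (c d : Con A) : Con A := conGen {p | c.r p.1 p.2 ∨ d.r p.1 p.2}

/-- Join of a family of congruences. -/
def iSup {I : Type} (f : I → Con A) : Con A := conGen {p | ∃ i, (f i).r p.1 p.2}

/-- Composition of congruences as binary relations. -/
def comp (c d : Con A) (a b : A.carrier) : Prop := ∃ x, c.r a x ∧ d.r x b

/-- `d` covers `c` in the congruence lattice. -/
def Covers (c d : Con A) : Prop := c < d ∧ ∀ e : Con A, c < e → e ≤ d → e = d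

theorem le_sup_right {c d : Con A} : d ≤ sup c d :=
  fun a b h e he => he (a, b) (Or.inr h)

def toSetoid (c : Con A) : Setoid A.carrier := ⟨c.r, ⟨c.refl, c.symm, c.trans⟩⟩

end Con

/-- The quotient algebra `A/γ`. -/
noncomputable def quotAlg (A : Algebra σ) (γ : Con A) : Algebra σ where
  carrier := Quotient γ.toSetoid
  interp o x := Quotient.mk γ.toSetoid (A.interp o (fun i => (x i).out))

/-- The quotient congruence `α/γ` for `γ ≤ α`. -/
noncomputable def Con.quot {A : Algebra σ} (α γ : Con A) (h : γ ≤ α) : Con (quotAlg A γ) where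
  r x y := Quotient.liftOn₂ x y (fun a b => α.r a b)
    (fun a b a' b' ha hb => propext
      ⟨fun hr => α.trans (α.symm (h _ _ ha)) (α.trans hr (h _ _ hb)),
       fun hr => α.trans (h _ _ ha) (α.trans hr (α.symm (h _ _ hb)))⟩)
  refl x := Quotient.inductionOn x fun a => α.refl a
  symm {x y} h' := Quotient.inductionOn₂ x y (fun _ _ hab => α.symm hab) h'
  trans {x y z} h1 h2 :=
    Quotient.inductionOn₃ x y z (fun _ _ _ hab hbc => α.trans hab hbc) h1 h2
  compat o x y hxy := by
    show α.r (A.interp o fun i => (x i).out) (A.interp o fun i => (y i).out)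
    refine α.compat o _ _ fun i => ?_
    have h1 := hxy i
    rw [← Quotient.out_eq (x i), ← Quotient.out_eq (y i)] at h1
    exact h1

/-- The polynomial operations of an algebra: the clone generated by the basic
operations, the projections and the constants. -/
inductive IsPolynomial (A : Algebra σ) : {n : ℕ} → ((Fin n → A.carrier) → A.carrier) → Prop
  | proj {n : ℕ} (i : Fin n) : IsPolynomial A (fun x => x i)
  | const {n : ℕ} (a : A.carrier) : IsPolynomial A (fun _ : Fin n → A.carrier => a)
  | app {n : ℕ} (o : σ.ops) (g : Fin (σ.arity o) → (Fin n → A.carrier) → A.carrier) :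
      (∀ j, IsPolynomial A (g j)) → IsPolynomial A (fun x => A.interp o (fun j => g j x))

/-- Substituting, coordinatewise according to the grouping `g` and the choice
vector `ε`, the entries of `b` (where `ε` is `true`) or of `a` (where `ε` is `false`). -/
def chooseVec {β : Type} {N n : ℕ} (g : Fin N → Fin n) (a b : Fin N → β)
    (ε : Fin n → Bool) : Fin N → β :=
  fun i => if ε (g i) then b i else a i

/-- The higher centralizer relation `C(α₁,…,αₙ,β;δ)` of Bulatov.  Polynomials with
grouped variables are modelled by a polynomial `p` of arity `N` together with a
grouping map `g : Fin N → Fin (n+1)`; the group `Fin.last n` is the `β`-group. -/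
def Centralizes {A : Algebra σ} {n : ℕ} (α : Fin n → Con A) (β δ : Con A) : Prop :=
  ∀ (N : ℕ) (p : (Fin N → A.carrier) → A.carrier), IsPolynomial A p →
    ∀ (g : Fin N → Fin (n + 1)) (a b : Fin N → A.carrier),
      (∀ i, (Fin.lastCases (motive := fun _ => Con A) β α (g i)).r (a i) (b i)) →
      (∀ ε : Fin n → Bool, ε ≠ (fun _ => true) →
        δ.r (p (chooseVec g a b (Fin.lastCases (motive := fun _ => Bool) false ε)))
            (p (chooseVec g a b (Fin.lastCases (motive := fun _ => Bool) true ε)))) →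
      δ.r (p (chooseVec g a b (Fin.lastCases (motive := fun _ => Bool) false fun _ => true)))
          (p (chooseVec g a b (Fin.lastCases (motive := fun _ => Bool) true fun _ => true)))

/-- The higher commutator `[α₁,…,αₙ,β]`: the smallest congruence `δ` such that
`C(α₁,…,αₙ,β;δ)` holds. -/
def commutator {A : Algebra σ} {n : ℕ} (α : Fin n → Con A) (β : Con A) : Con A :=
  Con.sInf {δ : Con A | Centralizes α β δ}

/-- The higher commutator of a nonempty list of congruences, with the convention
`[α] = α` for a single congruence. -/
def commList {A : Algebra σ} : {n : ℕ} → (Fin (n + 1) → Con A) → Con A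
  | 0, γ => γ 0
  | (n+1), γ => commutator (fun j : Fin (n+1) => γ j.castSucc) (γ (Fin.last (n+1)))

/-- The `m`-fold commutator `[θ,…,θ]_m` (for `m ≥ 1`). -/
def nfold {A : Algebra σ} (θ : Con A) (m : ℕ) : Con A :=
  commList (fun _ : Fin (m - 1 + 1) => θ)

/-- The binary commutator `[c,d]`. -/
def binComm {A : Algebra σ} (c d : Con A) : Con A := commutator (fun _ : Fin 1 => c) d

/-- The lower central series `(θ]ⁿ`. -/
def lcs {A : Algebra σ} (θ : Con A) : ℕ → Con A
  | 0 => θ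
  | (k+1) => binComm θ (lcs θ k)

/-- The derived series `[θ]ⁿ`. -/
def derived {A : Algebra σ} (θ : Con A) : ℕ → Con A
  | 0 => θ
  | (k+1) => binComm (derived θ k) (derived θ k)

/-- An algebra is nilpotent if some term of the lower central series of `1_A` is `0_A`. -/
def Nilpotent (A : Algebra σ) : Prop := ∃ m, lcs (Con.top : Con A) m = Con.bot

/-- An algebra is nilpotent of class `n` if `(1_A]ⁿ = 0_A`. -/
def NilpotentOfClass (A : Algebra σ) (n : ℕ) : Prop := lcs (Con.top : Con A) n = Con.bot

/-- A congruence is solvable if some term of its derived series is `0_A`. -/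
def SolvableCon {A : Algebra σ} (θ : Con A) : Prop := ∃ m, derived θ m = Con.bot

/-- `A` is `n`-supernilpotent if `[1_A,…,1_A]_n = 0_A`. -/
def Supernilpotent (A : Algebra σ) (n : ℕ) : Prop := nfold (Con.top : Con A) n = Con.bot

/-- A polynomial `f` absorbs the tuple `a` to the element `c`. -/
def Absorbs (A : Algebra σ) {k : ℕ} (f : (Fin k → A.carrier) → A.carrier)
    (a : Fin k → A.carrier) (c : A.carrier) : Prop :=
  ∀ b : Fin k → A.carrier, (∃ i, b i = a i) → f b = c

/-- Terms over a signature with variables in `X`. -/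
inductive Term (σ : Signature) (X : Type) : Type
  | var : X → Term σ X
  | app : (o : σ.ops) → (Fin (σ.arity o) → Term σ X) → Term σ X

/-- Evaluation of a term in an algebra under an assignment of the variables. -/
def Term.eval {X : Type} (A : Algebra σ) (v : X → A.carrier) : Term σ X → A.carrier
  | Term.var x => v x
  | Term.app o t => A.interp o fun i => Term.eval A v (t i)

/-- Substitution of terms into a term. -/
def Term.subst {X Y : Type} : Term σ X → (X → Term σ Y) → Term σ Y
  | Term.var x, s => s x
  | Term.app o t, s => Term.app o fun i => Term.subst (t i) s

/-- `A` possesses a Mal'cev term. -/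
def HasMalcevTerm (A : Algebra σ) : Prop :=
  ∃ t : Term σ (Fin 3), ∀ a b : A.carrier,
    t.eval A ![a, b, b] = a ∧ t.eval A ![b, b, a] = a

/-- A class of algebras is a variety when it is the class of all models of a set
of identities. -/
def IsVariety (V : Algebra σ → Prop) : Prop :=
  ∃ E : Set (Term σ ℕ × Term σ ℕ),
    ∀ A : Algebra σ, V A ↔ ∀ e ∈ E, ∀ v : ℕ → A.carrier, e.1.eval A v = e.2.eval A v

/-- Two terms are `V`-equivalent when they evaluate equally in every member of `V`. -/
def vSetoid (V : Algebra σ → Prop) (X : Type) : Setoid (Term σ X) where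
  r t s := ∀ A : Algebra σ, V A → ∀ v : X → A.carrier, t.eval A v = s.eval A v
  iseqv := ⟨fun _ _ _ _ => rfl, fun h A hA v => (h A hA v).symm,
    fun h h' A hA v => (h A hA v).trans (h' A hA v)⟩

/-- The `V`-free algebra on the set `X` of generators. -/
noncomputable def freeAlg (V : Algebra σ → Prop) (X : Type) : Algebra σ where
  carrier := Quotient (vSetoid V X)
  interp o x := Quotient.mk (vSetoid V X) (Term.app o fun i => (x i).out)

/-- The principal congruence `θ(a,b)` generated by the pair `(a,b)`. -/
def conPair (A : Algebra σ) (a b : A.carrier) : Con A := Con.conGen {(a, b)}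

/-- A weak difference term for the class `V`. -/
def IsWeakDiffTerm (V : Algebra σ → Prop) (c : Term σ (Fin 3)) : Prop :=
  ∀ A : Algebra σ, V A → ∀ a b : A.carrier,
    (binComm (conPair A a b) (conPair A a b)).r (c.eval A ![a, b, b]) a ∧
    (binComm (conPair A a b) (conPair A a b)).r a (c.eval A ![b, b, a])

/-- A weak `n`-difference term for the class `V`. -/
def IsWeakNDiffTerm (V : Algebra σ → Prop) (n : ℕ) (c : Term σ (Fin 3)) : Prop :=
  ∀ A : Algebra σ, V A → ∀ a b : A.carrier,
    (nfold (conPair A a b) n).r (c.eval A ![a, b, b]) a ∧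
    (nfold (conPair A a b) n).r a (c.eval A ![b, b, a])

/-- Order-preserving maps on the congruence lattice. -/
def MonotoneCon {A : Algebra σ} (F : Con A → Con A) : Prop :=
  ∀ c d : Con A, c ≤ d → F c ≤ F d

/-- `p` is a weak `f`-term of `A` with respect to the interpretation `F`. -/
def IsWeakFTerm (A : Algebra σ) (F : Con A → Con A) (p : Term σ (Fin 3)) : Prop :=
  ∀ (θ : Con A) (a b : A.carrier), θ.r a b →
    (F θ).r (p.eval A ![a, b, b]) a ∧ (F θ).r a (p.eval A ![b, b, a])

/-- `p` is a weak `f`-term for the class `V`. -/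
def HasWeakFTermVariety (V : Algebra σ → Prop) (p : Term σ (Fin 3)) : Prop :=
  ∀ A : Algebra σ, V A → ∃ F : Con A → Con A, MonotoneCon F ∧ IsWeakFTerm A F p

/-- The set `T^θ_{n,f}(θ₁,…,θₙ)` of pairs coming from polynomials which
`f(θ)`-absorb on the cube `{ā₁,b̄₁}×⋯×{āₙ,b̄ₙ}`. -/
def TSet (A : Algebra σ) (F : Con A → Con A) (θ : Con A) {n : ℕ} (θs : Fin n → Con A) :
    Set (A.carrier × A.carrier) :=
  {pr | ∃ (N : ℕ) (g : (Fin N → A.carrier) → A.carrier), IsPolynomial A g ∧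
    ∃ (gr : Fin N → Fin n) (a b : Fin N → A.carrier),
      (∀ i, (θs (gr i)).r (a i) (b i)) ∧
      (∀ ε : Fin n → Bool, (∃ j, ε j = false) →
        (F θ).r (g (fun i => if ε (gr i) then b i else a i)) (g a)) ∧
      pr = (g b, g a)}

/-- Homomorphisms of algebras. -/
def IsHom (A B : Algebra σ) (h : A.carrier → B.carrier) : Prop :=
  ∀ (o : σ.ops) (x : Fin (σ.arity o) → A.carrier),
    h (A.interp o x) = B.interp o (fun i => h (x i))

/-- The product of a family of algebras. -/
def prodAlg {I : Type} (As : I → Algebra σ) : Algebra σ where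
  carrier := ∀ i, (As i).carrier
  interp o x i := (As i).interp o (fun j => x j i)

/-- The subuniverse generated by a subset. -/
inductive Gen (A : Algebra σ) (S : Set A.carrier) : A.carrier → Prop
  | base {a : A.carrier} : a ∈ S → Gen A S a
  | app (o : σ.ops) (x : Fin (σ.arity o) → A.carrier) :
      (∀ i, Gen A S (x i)) → Gen A S (A.interp o x)

/-- `A` possesses a Taylor term. -/
def HasTaylorTerm (A : Algebra σ) : Prop :=
  ∃ (n : ℕ) (t : Term σ (Fin n)), 1 ≤ n ∧
    (∀ a : A.carrier, t.eval A (fun _ => a) = a) ∧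
    ∀ i : Fin n, ∃ u v : Fin n → Bool, u i = true ∧ v i = false ∧
      ∀ x y : A.carrier,
        t.eval A (fun j => if u j then x else y) = t.eval A (fun j => if v j then x else y)

/-- The variety `V` possesses a Taylor term. -/
def VarietyHasTaylorTerm (V : Algebra σ → Prop) : Prop :=
  ∃ (n : ℕ) (t : Term σ (Fin n)), 1 ≤ n ∧
    (∀ A : Algebra σ, V A → ∀ a : A.carrier, t.eval A (fun _ => a) = a) ∧
    ∀ i : Fin n, ∃ u v : Fin n → Bool, u i = true ∧ v i = false ∧
      ∀ A : Algebra σ, V A → ∀ x y : A.carrier,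
        t.eval A (fun j => if u j then x else y) = t.eval A (fun j => if v j then x else y)

/-- `Ξ(θ)`: the smallest set of congruences containing `θ` and closed under
higher commutators (of arity at least 2) of its members. -/
inductive Xi {A : Algebra σ} (θ : Con A) : Con A → Prop
  | base : Xi θ θ
  | comm {k : ℕ} (γ : Fin (k + 2) → Con A) : (∀ j, Xi θ (γ j)) → Xi θ (commList γ)

/-- An expanded loop on the carrier `α` with extra operations indexed by `ι`. -/
structure ExpLoop (ι : Type) (ar : ι → ℕ) (α : Type) : Type where
  mul : α → α → α
  ldiv : α → α → α
  rdiv : α → α → α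
  zero : α
  extra : (i : ι) → (Fin (ar i) → α) → α
  ldiv_mul : ∀ x y, ldiv x (mul x y) = y
  mul_rdiv : ∀ x y, rdiv (mul x y) y = x
  mul_ldiv : ∀ x y, mul x (ldiv x y) = y
  rdiv_mul : ∀ x y, mul (rdiv x y) y = x
  zero_mul : ∀ x, mul zero x = x
  mul_zero : ∀ x, mul x zero = x

/-- Operation symbols of an expanded loop. -/
inductive LoopOp (ι : Type) : Type
  | mul | ldiv | rdiv | zero
  | extra : ι → LoopOp ι

/-- The signature of an expanded loop. -/
@[reducible] def loopSig (ι : Type) (ar : ι → ℕ) : Signature where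
  ops := LoopOp ι
  arity o := match o with
    | .mul => 2
    | .ldiv => 2
    | .rdiv => 2
    | .zero => 0
    | .extra i => ar i

/-- The algebra underlying an expanded loop. -/
def ExpLoop.toAlgebra {ι : Type} {ar : ι → ℕ} {α : Type} (L : ExpLoop ι ar α) :
    Algebra (loopSig ι ar) where
  carrier := α
  interp o := match o with
    | .mul => fun x => L.mul (x 0) (x 1)
    | .ldiv => fun x => L.ldiv (x 0) (x 1)
    | .rdiv => fun x => L.rdiv (x 0) (x 1)
    | .zero => fun _ => L.zero
    | .extra i => L.extra i

/-- An expanded loop is of `n`-type. -/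
def ExpLoop.IsNType {ι : Type} {ar : ι → ℕ} {α : Type} (L : ExpLoop ι ar α) (n : ℕ) : Prop :=
  (∀ p : Σ k : ℕ, (Fin k → α) → α,
      (∃ i : ι, p = ⟨ar i, L.extra i⟩) ↔
        (1 ≤ p.1 ∧ p.1 ≤ n - 1 ∧ IsPolynomial L.toAlgebra p.2 ∧
          Absorbs L.toAlgebra p.2 (fun _ => L.zero) L.zero)) ∧
  (∀ f : (Fin (n - 1) → α) → α,
      IsPolynomial L.toAlgebra f → Absorbs L.toAlgebra f (fun _ => L.zero) L.zero →
      ∀ (j : Fin (n - 1)) (x : Fin (n - 1) → α) (u v : α),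
        f (Function.update x j (L.mul u v)) =
          L.mul (f (Function.update x j u)) (f (Function.update x j v))) ∧
  (∀ k : ℕ, 2 ≤ k → k < n →
      commList (Fin.snoc (fun _ : Fin (n - k) => (Con.top : Con L.toAlgebra))
        (nfold Con.top k)) = Con.bot)

/-- `A` is polynomially equivalent to an `n`-type expanded loop on the same carrier. -/
def PolyEquivNTypeLoop (A : Algebra σ) (n : ℕ) : Prop :=
  ∃ (ι : Type) (ar : ι → ℕ) (L : ExpLoop ι ar A.carrier),
    L.IsNType n ∧
    ∀ (k : ℕ) (f : (Fin k → A.carrier) → A.carrier),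
      IsPolynomial A f ↔ IsPolynomial L.toAlgebra f

/-- Left-associated product of a list with initial value `c`. -/
def lprodFrom {β : Type} (mul : β → β → β) (c : β) (l : List β) : β := List.foldl mul c l

/-- Left-associated product of a list (with a default value for the empty list). -/
def lprodList {β : Type} (mul : β → β → β) (dflt : β) : List β → β
  | [] => dflt
  | a :: l => List.foldl mul a l

/-- Left-associated product of a nonempty tuple. -/
def lassoc {β : Type} (mul : β → β → β) : {m : ℕ} → (Fin (m + 1) → β) → β
  | 0, y => y 0
  | (m+1), y => mul (lassoc mul (Fin.init y)) (y (Fin.last (m+1)))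

/-- `A` has a representation of degree `n`. -/
def HasRepOfDegree (A : Algebra σ) (n : ℕ) : Prop :=
  ∃ (z : A.carrier) (r : (Fin 2 → A.carrier) → A.carrier),
    IsPolynomial A r ∧ (∀ x : A.carrier, r ![z, x] = x) ∧ (∀ x : A.carrier, r ![x, z] = x) ∧
    ∀ (k : ℕ) (f : (Fin k → A.carrier) → A.carrier), IsPolynomial A f →
      ∃ (c : A.carrier) (R : ℕ → (Fin k → A.carrier) → A.carrier),
        (∀ m : ℕ, 1 ≤ m → m ≤ min k n →
          ∃ (l : List (Finset (Fin k)))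
            (t : (S : Finset (Fin k)) → (Fin S.card → A.carrier) → A.carrier),
            l.Nodup ∧
            (∀ S : Finset (Fin k), S ∈ l ↔ S.card = m) ∧
            (∀ S ∈ l, IsPolynomial A (t S) ∧ Absorbs A (t S) (fun _ => z) z) ∧
            (∀ x : Fin k → A.carrier,
              R m x = lprodList (fun u v => r ![u, v]) z
                (l.map (fun S => t S (fun j => x ((S.orderIsoOfFin rfl j).val)))))) ∧
        ∀ x : Fin k → A.carrier,
          f x = lprodFrom (fun u v => r ![u, v]) c
            ((List.range' 1 (min k n)).map (fun m => R m x))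

/-- Products of `0`-absorbing polynomials (of arities between `lo` and `hi`)
in a given set of variables. -/
inductive ProdOfAbs {ι : Type} {ar : ι → ℕ} {α : Type} (L : ExpLoop ι ar α)
    (lo hi : ℕ) {I : Type} : ((I → α) → α) → Prop
  | base {p : ℕ} (h : (Fin p → α) → α) (sel : Fin p → I) :
      lo ≤ p → p ≤ hi → IsPolynomial L.toAlgebra h →
      Absorbs L.toAlgebra h (fun _ => L.zero) L.zero →
      ProdOfAbs L lo hi (fun v => h (fun j => v (sel j)))
  | mul {F G : (I → α) → α} :
      ProdOfAbs L lo hi F → ProdOfAbs L lo hi G →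
      ProdOfAbs L lo hi (fun v => L.mul (F v) (G v))

/-- The terms `q_m` (for `m ≥ 2`, `qSeq q (m-2)` is `q_m`):
`q₂ := q`, `q_{m+1}(x,y,z) := q(x, q_m(x,y,y), q_m(x,y,z))`. -/
def qSeq (q : Term σ (Fin 3)) : ℕ → Term σ (Fin 3)
  | 0 => q
  | (k+1) => q.subst ![Term.var 0, (qSeq q k).subst ![Term.var 0, Term.var 1, Term.var 1], qSeq q k]

/-!
Work with *twin* polynomials: polynomials obtained from one term by plugging in `α`-related
constants.  If `α` is a supernilpotent congruence of a finite algebra, then twins behave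
uniformly: when `h` and `h'` are unary `α`-twins mapping `U` into itself and `h` is injective on
`U`, then so is `h'`.  Indeed, nesting the idempotent powers of `h` and `h'` produces, from any
`s ∈ U` and its image `s'` under the idempotent power of `h'`, a cube with one vertex `s` and all
others `s'`, and supernilpotence forces `s = s'`.

For a cover `γ ⋖ β ≤ α` let `U` be a minimal set in the sense of tame congruence theory: the range
of an idempotent polynomial, on which every polynomial is injective or collapses `β` into `γ`.  If
no binary polynomial with values in `U` is injective on `U` in both variables, uniformity shows
that the polynomials into `U` depend modulo `γ` on a single variable at a time; otherwise such a
polynomial yields a polynomial Mal'cev operation on the blocks of `U`.  In both cases two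
`β`-twins that agree modulo `γ` at a point agree modulo `γ` on its `β`-block, that is,
`[β, β] ≤ γ`, and descending through covers proves that `α` is solvable.

If `α = 1`, a Taylor term excludes the first case, and the second one gives the stronger
`[β, 1] ≤ γ`; the difference of two twins, formed with the Mal'cev operation, turns this into
`[1, β] ≤ γ`, hence nilpotence.  For the Mal'cev term pass to the reduct to the Taylor term, which
is idempotent.
Turning the constants of polynomials into variables and correcting by iterated inverses produces
term operations `d` with `d x y y = x`.  Given `w` and `z`, centrality of covers brings `d w w z`
closer to `z`, one cover at a time, until it is `z`; composing the resulting operations over all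
pairs gives a Mal'cev term.
-/

section Twin

/-- Twin operations: `Twin A R f f'` says that `f` and `f'` arise from one term by plugging in
constants which are coordinatewise `R`-related.  For `R` a congruence these are the twin
polynomials of commutator theory; `R` equality gives the polynomials, and `R` empty the term
operations. -/
inductive Twin (A : Algebra σ) (R : A.carrier → A.carrier → Prop) {X : Type} :
    ((X → A.carrier) → A.carrier) → ((X → A.carrier) → A.carrier) → Prop
  | proj (x : X) : Twin A R (fun v => v x) (fun v => v x)
  | const {c d : A.carrier} : R c d → Twin A R (fun _ => c) (fun _ => d)
  | app (o : σ.ops) (g g' : Fin (σ.arity o) → (X → A.carrier) → A.carrier) :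
      (∀ j, Twin A R (g j) (g' j)) →
      Twin A R (fun v => A.interp o (fun j => g j v)) (fun v => A.interp o (fun j => g' j v))

/-- Polynomials with variables from an arbitrary type, as twins of themselves. -/
abbrev Poly (A : Algebra σ) {X : Type} (f : (X → A.carrier) → A.carrier) : Prop :=
  Twin A Eq f f

/-- Term operations: polynomials without constants. -/
abbrev TermOp (A : Algebra σ) {X : Type} (f : (X → A.carrier) → A.carrier) : Prop :=
  Twin A (fun _ _ => False) f f

/-- Twins of one variable, in curried form. -/
def UnaryTwin (A : Algebra σ) (R : A.carrier → A.carrier → Prop)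
    (f f' : A.carrier → A.carrier) : Prop :=
  Twin A R (X := Unit) (fun v => f (v ())) (fun v => f' (v ()))

/-- Twins of two variables, in curried form. -/
def BinaryTwin (A : Algebra σ) (R : A.carrier → A.carrier → Prop)
    (f f' : A.carrier → A.carrier → A.carrier) : Prop :=
  Twin A R (X := Fin 2) (fun v => f (v 0) (v 1)) (fun v => f' (v 0) (v 1))

/-- Twins of three variables, in curried form. -/
def TernaryTwin (A : Algebra σ) (R : A.carrier → A.carrier → Prop)
    (f f' : A.carrier → A.carrier → A.carrier → A.carrier) : Prop :=
  Twin A R (X := Fin 3) (fun v => f (v 0) (v 1) (v 2)) (fun v => f' (v 0) (v 1) (v 2))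

/-- Unary polynomials. -/
abbrev UnaryPoly (A : Algebra σ) (f : A.carrier → A.carrier) : Prop := UnaryTwin A Eq f f

/-- Binary polynomials. -/
abbrev BinaryPoly (A : Algebra σ) (f : A.carrier → A.carrier → A.carrier) : Prop :=
  BinaryTwin A Eq f f

/-- Ternary polynomials. -/
abbrev TernaryPoly (A : Algebra σ) (f : A.carrier → A.carrier → A.carrier → A.carrier) : Prop :=
  TernaryTwin A Eq f f

/-- Binary term operations. -/
abbrev BinaryTermOp (A : Algebra σ) (f : A.carrier → A.carrier → A.carrier) : Prop :=
  BinaryTwin A (fun _ _ => False) f f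

/-- Ternary term operations. -/
abbrev TernaryTermOp (A : Algebra σ) (f : A.carrier → A.carrier → A.carrier → A.carrier) : Prop :=
  TernaryTwin A (fun _ _ => False) f f

variable {A : Algebra σ} {R S : A.carrier → A.carrier → Prop} {X Y : Type}
  {f f' : (X → A.carrier) → A.carrier}

theorem Twin.mono (h : Twin A R f f') (hRS : ∀ a b, R a b → S a b) : Twin A S f f' := by
  induction h with
  | proj x => exact .proj x
  | const h => exact .const (hRS _ _ h)
  | app o g g' _ ih => exact .app o g g' ih

theorem Twin.symm (h : Twin A R f f') (hR : ∀ a b, R a b → R b a) : Twin A R f' f := by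
  induction h with
  | proj x => exact .proj x
  | const h => exact .const (hR _ _ h)
  | app o g g' _ ih => exact .app o g' g ih

theorem Twin.left (h : Twin A R f f') : Poly A f := by
  induction h with
  | proj x => exact .proj x
  | const _ => exact .const rfl
  | app o g _ _ ih => exact .app o g g ih

theorem Twin.right (h : Twin A R f f') : Poly A f' := by
  induction h with
  | proj x => exact .proj x
  | const _ => exact .const rfl
  | app o _ g' _ ih => exact .app o g' g' ih

theorem Twin.rel {β : Con A} (h : Twin A β.r f f') {v v' : X → A.carrier}
    (hv : ∀ x, β.r (v x) (v' x)) : β.r (f v) (f' v') := by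
  induction h with
  | proj x => exact hv x
  | const h => exact h
  | app o g g' _ ih => exact β.compat o _ _ ih

theorem Twin.subst {g g' : (Y → A.carrier) → A.carrier} (h : Twin A R g g')
    {s s' : Y → (X → A.carrier) → A.carrier} (hs : ∀ y, Twin A R (s y) (s' y)) :
    Twin A R (fun v => g (fun y => s y v)) (fun v => g' (fun y => s' y v)) := by
  induction h with
  | proj x => exact hs x
  | const h => exact .const h
  | app o g g' _ ih => exact .app o _ _ ih

theorem Twin.iterate {F F' : (X → A.carrier) → A.carrier → A.carrier}
    (hF : ∀ a a' : (X → A.carrier) → A.carrier, Twin A R a a' →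
      Twin A R (fun v => F v (a v)) (fun v => F' v (a' v))) (k : ℕ)
    {a a' : (X → A.carrier) → A.carrier} (ha : Twin A R a a') :
    Twin A R (fun v => (F v)^[k] (a v)) (fun v => (F' v)^[k] (a' v)) := by
  induction k with
  | zero => exact ha
  | succ k ih =>
    simp only [Function.iterate_succ_apply']
    exact hF _ _ ih

theorem TermOp.twin (h : TermOp A f) (R : A.carrier → A.carrier → Prop) : Twin A R f f :=
  h.mono fun _ _ => False.elim

theorem Poly.twin (h : Poly A f) (β : Con A) : Twin A β.r f f :=
  h.mono fun a _ e => e ▸ β.refl a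

theorem Poly.of_isPolynomial {n : ℕ} {p : (Fin n → A.carrier) → A.carrier}
    (h : IsPolynomial A p) : Poly A p := by
  induction h with
  | proj i => exact .proj i
  | const a => exact .const rfl
  | app o g _ ih => exact .app o _ _ ih

theorem Twin.update [DecidableEq X] (h : Twin A R f f') {v v' : X → A.carrier}
    (hv : ∀ x, R (v x) (v' x)) (x : X) :
    UnaryTwin A R (fun c => f (Function.update v x c)) (fun c => f' (Function.update v' x c)) := by
  refine h.subst (s := fun y w => Function.update v x (w ()) y)
    (s' := fun y w => Function.update v' x (w ()) y) fun y => ?_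
  obtain rfl | hy := eq_or_ne y x
  · simpa using Twin.proj (R := R) ()
  · simpa [Function.update_of_ne hy] using Twin.const (hv y)

theorem Twin.eval (t : Term σ Y) {s s' : Y → (X → A.carrier) → A.carrier}
    (hs : ∀ y, Twin A R (s y) (s' y)) :
    Twin A R (fun v => t.eval A fun y => s y v) (fun v => t.eval A fun y => s' y v) := by
  induction t with
  | var y => exact hs y
  | app o t ih => exact .app o _ _ ih

theorem TermOp.exists_term (h : Twin A (fun _ _ => False) f f') :
    ∃ t : Term σ X, ∀ v, t.eval A v = f v := by
  induction h with
  | proj x => exact ⟨.var x, fun _ => rfl⟩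
  | const h => exact h.elim
  | app o _ _ _ ih =>
    choose t ht using ih
    exact ⟨.app o t, fun v => congrArg (A.interp o) (funext fun j => ht j v)⟩

theorem Twin.exists_term (h : Twin A R f f') :
    ∃ t : Term σ (X ⊕ {p : A.carrier × A.carrier // R p.1 p.2}),
      (∀ v, f v = t.eval A (Sum.elim v fun p => p.1.1)) ∧
        ∀ v, f' v = t.eval A (Sum.elim v fun p => p.1.2) := by
  induction h with
  | proj x => exact ⟨.var (.inl x), fun _ => rfl, fun _ => rfl⟩
  | @const c d h => exact ⟨.var (.inr ⟨(c, d), h⟩), fun _ => rfl, fun _ => rfl⟩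
  | app o _ _ _ ih =>
    choose t ht ht' using ih
    exact ⟨.app o t, fun v => congrArg (A.interp o) (funext fun j => ht j v),
      fun v => congrArg (A.interp o) (funext fun j => ht' j v)⟩

theorem Poly.exists_term (h : Twin A Eq f f') :
    ∃ t : Term σ (X ⊕ A.carrier), ∀ v, f v = t.eval A (Sum.elim v id) := by
  induction h with
  | proj x => exact ⟨.var (.inl x), fun _ => rfl⟩
  | @const c _ _ => exact ⟨.var (.inr c), fun _ => rfl⟩
  | app o _ _ _ ih =>
    choose t ht using ih
    exact ⟨.app o t, fun v => congrArg (A.interp o) (funext fun j => ht j v)⟩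

theorem UnaryTwin.apply {f f' : A.carrier → A.carrier} (h : UnaryTwin A R f f')
    {a a' : (X → A.carrier) → A.carrier} (ha : Twin A R a a') :
    Twin A R (fun v => f (a v)) (fun v => f' (a' v)) :=
  Twin.subst h (s := fun _ => a) (s' := fun _ => a') fun _ => ha

theorem BinaryTwin.apply {f f' : A.carrier → A.carrier → A.carrier} (h : BinaryTwin A R f f')
    {a a' b b' : (X → A.carrier) → A.carrier} (ha : Twin A R a a') (hb : Twin A R b b') :
    Twin A R (fun v => f (a v) (b v)) (fun v => f' (a' v) (b' v)) :=
  Twin.subst h (s := ![a, b]) (s' := ![a', b']) fun i => by fin_cases i <;> assumption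

theorem TernaryTwin.apply {f f' : A.carrier → A.carrier → A.carrier → A.carrier}
    (h : TernaryTwin A R f f') {a a' b b' c c' : (X → A.carrier) → A.carrier}
    (ha : Twin A R a a') (hb : Twin A R b b') (hc : Twin A R c c') :
    Twin A R (fun v => f (a v) (b v) (c v)) (fun v => f' (a' v) (b' v) (c' v)) :=
  Twin.subst h (s := ![a, b, c]) (s' := ![a', b', c']) fun i => by fin_cases i <;> assumption

namespace UnaryTwin

variable {f f' g g' : A.carrier → A.carrier}

theorem id : UnaryTwin A R (fun x => x) (fun x => x) := Twin.proj ()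

theorem comp (hf : UnaryTwin A R f f') (hg : UnaryTwin A R g g') :
    UnaryTwin A R (fun x => f (g x)) (fun x => f' (g' x)) :=
  hf.apply hg

theorem iterate (hf : UnaryTwin A R f f') (k : ℕ) : UnaryTwin A R f^[k] f'^[k] :=
  Twin.iterate (F := fun _ => f) (F' := fun _ => f') (fun _ _ ha => hf.apply ha) k (.proj ())

theorem mono (h : UnaryTwin A R f f') (hRS : ∀ a b, R a b → S a b) : UnaryTwin A S f f' :=
  Twin.mono h hRS

theorem symm {β : Con A} (h : UnaryTwin A β.r f f') : UnaryTwin A β.r f' f :=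
  Twin.symm h fun _ _ => β.symm

theorem left (h : UnaryTwin A R f f') : UnaryPoly A f := Twin.left h

theorem right (h : UnaryTwin A R f f') : UnaryPoly A f' := Twin.right h

theorem rel {β : Con A} (h : UnaryTwin A β.r f f') {a b : A.carrier} (hab : β.r a b) :
    β.r (f a) (f' b) :=
  Twin.rel h (v := fun _ => a) (v' := fun _ => b) fun _ => hab

end UnaryTwin

theorem UnaryPoly.twin {f : A.carrier → A.carrier} (h : UnaryPoly A f) (β : Con A) :
    UnaryTwin A β.r f f :=
  Poly.twin h β

theorem UnaryPoly.rel {f : A.carrier → A.carrier} (h : UnaryPoly A f) (β : Con A)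
    {a b : A.carrier} (hab : β.r a b) : β.r (f a) (f b) :=
  (h.twin β).rel hab

namespace BinaryTwin

variable {p p' : A.carrier → A.carrier → A.carrier} {a a' : A.carrier}

theorem row (hp : BinaryTwin A R p p') (h : R a a') : UnaryTwin A R (p a) (p' a') :=
  hp.apply (X := Unit) (.const h) (.proj ())

theorem col (hp : BinaryTwin A R p p') (h : R a a') :
    UnaryTwin A R (fun x => p x a) (fun x => p' x a') :=
  hp.apply (X := Unit) (.proj ()) (.const h)

theorem iterate_right (hp : BinaryTwin A R p p') (k : ℕ) :
    BinaryTwin A R (fun x y => (p x)^[k] y) (fun x y => (p' x)^[k] y) :=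
  Twin.iterate (F := fun v => p (v 0)) (F' := fun v => p' (v 0))
    (fun _ _ ha => hp.apply (.proj 0) ha) k (.proj 1)

theorem iterate_left (hp : BinaryTwin A R p p') (k : ℕ) :
    BinaryTwin A R (fun x y => (fun z => p z y)^[k] x) (fun x y => (fun z => p' z y)^[k] x) :=
  Twin.iterate (F := fun v z => p z (v 1)) (F' := fun v z => p' z (v 1))
    (fun _ _ ha => hp.apply ha (.proj 1)) k (.proj 0)

end BinaryTwin

theorem BinaryPoly.twin {p : A.carrier → A.carrier → A.carrier} (hp : BinaryPoly A p)
    (β : Con A) : BinaryTwin A β.r p p :=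
  Poly.twin hp β

theorem BinaryTermOp.twin {p : A.carrier → A.carrier → A.carrier} (hp : BinaryTermOp A p)
    (R : A.carrier → A.carrier → Prop) : BinaryTwin A R p p :=
  TermOp.twin hp R

theorem TernaryTermOp.twin {p : A.carrier → A.carrier → A.carrier → A.carrier}
    (hp : TernaryTermOp A p) (R : A.carrier → A.carrier → Prop) : TernaryTwin A R p p :=
  TermOp.twin hp R

theorem TernaryPoly.twin {p : A.carrier → A.carrier → A.carrier → A.carrier}
    (hp : TernaryPoly A p) (β : Con A) : TernaryTwin A β.r p p :=
  Poly.twin hp β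

end Twin

section IdempotentPower

variable {B : Type} {f : B → B} {U : Set B}

open scoped Nat in
/-- The power of a self-map `f` with exponent `(card B)!`; on a finite set it is idempotent, and
the exponent does not depend on `f`. -/
noncomputable def idemPow (f : B → B) : B → B := f^[(Nat.card B)!]

open scoped Nat in
/-- The power of a self-map `f` preceding `idemPow f`; on a finite set it inverts `f` on every
invariant set on which `f` is injective. -/
noncomputable def invPow (f : B → B) : B → B := f^[(Nat.card B)! - 1]

theorem apply_invPow (f : B → B) (x : B) : f (invPow f x) = idemPow f x := by
  rw [invPow, idemPow, ← Function.iterate_succ_apply' f,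
    Nat.succ_eq_add_one, Nat.sub_add_cancel (Nat.factorial_pos _)]

theorem invPow_apply (f : B → B) (x : B) : invPow f (f x) = idemPow f x := by
  rw [invPow, idemPow, ← Function.iterate_succ_apply,
    Nat.succ_eq_add_one, Nat.sub_add_cancel (Nat.factorial_pos _)]

theorem idemPow_idemPow [Finite B] (f : B → B) (x : B) : idemPow f (idemPow f x) = idemPow f x := by
  have := Fintype.ofFinite B
  have hcard : Fintype.card B < Fintype.card (Fin (Fintype.card B + 1)) := by simp
  obtain ⟨i, j, hij, he⟩ := Fintype.exists_ne_map_eq_of_card_lt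
    (fun i : Fin (Fintype.card B + 1) => f^[i] x) hcard
  wlog hlt : i < j generalizing i j
  · exact this j i hij.symm he.symm (lt_of_le_of_ne (not_lt.mp hlt) hij.symm)
  have hper : f^[i] x ∈ Function.periodicPts f := by
    refine Function.mk_mem_periodicPts (Nat.sub_pos_of_lt hlt) ?_
    rw [Function.IsPeriodicPt, Function.IsFixedPt, ← Function.iterate_add_apply,
      Nat.sub_add_cancel (Fin.le_def.mp hlt.le)]
    exact he.symm
  have hi : (i : ℕ) ≤ (Fintype.card B).factorial :=
    (Nat.le_of_lt_succ i.isLt).trans (Nat.self_le_factorial _)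
  have hN : idemPow f x = f^[(Fintype.card B).factorial - i] (f^[i] x) := by
    rw [idemPow, Nat.card_eq_fintype_card, ← Function.iterate_add_apply, Nat.sub_add_cancel hi]
  rw [hN, idemPow, Nat.card_eq_fintype_card]
  exact (Function.isPeriodicPt_factorial_card_of_mem_periodicPts hper).apply_iterate _

theorem invPow_idemPow_apply [Finite B] (f : B → B) (x : B) :
    invPow f (idemPow f (f x)) = idemPow f x := by
  have hcomm : idemPow f (f x) = f (idemPow f x) :=
    (Function.iterate_succ_apply f _ x).symm.trans (Function.iterate_succ_apply' f _ x)
  rw [hcomm, invPow_apply, idemPow_idemPow]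

theorem mapsTo_idemPow (hf : Set.MapsTo f U U) : Set.MapsTo (idemPow f) U U := hf.iterate _

theorem mapsTo_invPow (hf : Set.MapsTo f U U) : Set.MapsTo (invPow f) U U := hf.iterate _

theorem injOn_invPow (hf : Set.MapsTo f U U) (hinj : Set.InjOn f U) : Set.InjOn (invPow f) U :=
  hinj.iterate hf _

theorem idemPow_eq_self [Finite B] (hf : Set.MapsTo f U U) (hinj : Set.InjOn f U) {x : B}
    (hx : x ∈ U) : idemPow f x = x :=
  hinj.iterate hf _ (mapsTo_idemPow hf hx) hx (idemPow_idemPow f x)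

theorem injOn_of_idemPow_eq_self (h : ∀ x ∈ U, idemPow f x = x) : Set.InjOn f U := by
  intro x hx y hy hxy
  rw [← h x hx, ← h y hy, ← invPow_apply, ← invPow_apply, hxy]

variable {A : Algebra σ} {R : A.carrier → A.carrier → Prop}

theorem UnaryTwin.idemPow {f f' : A.carrier → A.carrier} (h : UnaryTwin A R f f') :
    UnaryTwin A R (idemPow f) (idemPow f') :=
  h.iterate _

theorem UnaryTwin.invPow {f f' : A.carrier → A.carrier} (h : UnaryTwin A R f f') :
    UnaryTwin A R (invPow f) (invPow f') :=
  h.iterate _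

theorem BinaryTwin.invPow_right {p p' : A.carrier → A.carrier → A.carrier}
    (h : BinaryTwin A R p p') : BinaryTwin A R (fun x => invPow (p x)) (fun x => invPow (p' x)) :=
  h.iterate_right _

theorem BinaryTwin.invPow_left {p p' : A.carrier → A.carrier → A.carrier}
    (h : BinaryTwin A R p p') :
    BinaryTwin A R (fun x y => invPow (p · y) x) (fun x y => invPow (p' · y) x) :=
  h.iterate_left _

/-- The idempotent power of `b` in its first variable, as a binary operation. -/
noncomputable def idemPowLeft (b : B → B → B) (x y : B) : B := idemPow (b · y) x

theorem BinaryTwin.idemPowLeft {b b' : A.carrier → A.carrier → A.carrier}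
    (h : BinaryTwin A R b b') : BinaryTwin A R (idemPowLeft b) (idemPowLeft b') :=
  h.iterate_left _

end IdempotentPower

section Uniformity

/-- The cubes `(I → Bool) → A` generated under the operations of `A` by the edges
`ε ↦ if ε i then b else a` with `R a b`; equivalently, the values of a polynomial
on the vertices of a box with `R`-related corners. -/
inductive IsCube (A : Algebra σ) (R : A.carrier → A.carrier → Prop) {I : Type} :
    ((I → Bool) → A.carrier) → Prop
  | edge (i : I) {a b : A.carrier} : R a b → IsCube A R (fun ε => if ε i then b else a)
  | app (o : σ.ops) (Φ : Fin (σ.arity o) → (I → Bool) → A.carrier) :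
      (∀ j, IsCube A R (Φ j)) → IsCube A R (fun ε => A.interp o (fun j => Φ j ε))

/-- Supernilpotence of a congruence, expressed by the centralizer relation itself. -/
def SupernilpotentCon {A : Algebra σ} (α : Con A) : Prop :=
  ∃ m, Centralizes (fun _ : Fin m => α) α Con.bot

variable {A : Algebra σ} {R : A.carrier → A.carrier → Prop} {I : Type} {α : Con A}

theorem IsCube.twin {X : Type} (i : I) {h h' : (X → A.carrier) → A.carrier}
    (hh : Twin A R h h') {Φ : X → (I → Bool) → A.carrier} (hΦ : ∀ x, IsCube A R (Φ x)) :
    IsCube A R (fun ε => if ε i then h' (fun x => Φ x ε) else h (fun x => Φ x ε)) := by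
  induction hh with
  | proj x => simpa using hΦ x
  | const hc => exact .edge i hc
  | app o g g' _ ih =>
    convert IsCube.app o _ ih using 2 with ε
    split_ifs <;> rfl

theorem IsCube.exists_isPolynomial [Finite A.carrier] {n : ℕ} {Φ : (Fin n → Bool) → A.carrier}
    (hΦ : IsCube A α.r Φ) :
    ∃ (N : ℕ) (g : Fin N → Fin n) (a b : Fin N → A.carrier) (p : (Fin N → A.carrier) → A.carrier),
      IsPolynomial A p ∧ (∀ i, α.r (a i) (b i)) ∧ ∀ ε, Φ ε = p (chooseVec g a b ε) := by
  obtain ⟨N, ⟨e⟩⟩ := Finite.exists_equiv_fin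
    (Fin n × {ab : A.carrier × A.carrier // α.r ab.1 ab.2})
  suffices ∃ p, IsPolynomial A p ∧ ∀ ε, Φ ε = p (chooseVec (fun i => (e.symm i).1)
      (fun i => (e.symm i).2.1.1) (fun i => (e.symm i).2.1.2) ε) by
    obtain ⟨p, hp, hΦp⟩ := this
    exact ⟨N, _, _, _, p, hp, fun i => (e.symm i).2.2, hΦp⟩
  induction hΦ with
  | @edge i a b hab =>
    refine ⟨fun x => x (e (i, ⟨(a, b), hab⟩)), .proj _, fun ε => ?_⟩
    simp [chooseVec]
  | app o Φ _ ih =>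
    choose p hp hΦp using ih
    refine ⟨fun x => A.interp o (fun j => p j x), .app o _ hp, fun ε => ?_⟩
    simp only [hΦp]

theorem Centralizes.rel_of_isCube [Finite A.carrier] {m : ℕ} {δ : Con A}
    (h : Centralizes (fun _ : Fin m => α) α δ) {Φ : (Fin (m + 1) → Bool) → A.carrier}
    (hΦ : IsCube A α.r Φ)
    (hε : ∀ ε : Fin m → Bool, ε ≠ (fun _ => true) →
      δ.r (Φ (Fin.lastCases (motive := fun _ => Bool) false ε))
        (Φ (Fin.lastCases (motive := fun _ => Bool) true ε))) :
    δ.r (Φ (Fin.lastCases (motive := fun _ => Bool) false fun _ => true))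
      (Φ (Fin.lastCases (motive := fun _ => Bool) true fun _ => true)) := by
  obtain ⟨N, g, a, b, p, hp, hab, hΦp⟩ := hΦ.exists_isPolynomial
  simp only [hΦp] at hε ⊢
  refine h N p hp g a b (fun i => ?_) hε
  cases g i using Fin.lastCases <;> simpa using hab i

theorem centralizes_commutator {n : ℕ} (α : Fin n → Con A) (β : Con A) :
    Centralizes α β (commutator α β) :=
  fun N p hp g a b hab h δ hδ => hδ N p hp g a b hab fun ε hε => h ε hε δ hδ

theorem SupernilpotentCon.of_nfold {n : ℕ} (hn : 2 ≤ n) (h : nfold α n = Con.bot) :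
    SupernilpotentCon α := by
  obtain ⟨m, rfl⟩ := Nat.exists_eq_add_of_le' hn
  exact ⟨m + 1, h ▸ centralizes_commutator _ _⟩

theorem isCube_ite_forall_mem {H H' : A.carrier → A.carrier} (hH : UnaryTwin A R H' H)
    {s : A.carrier} (hs : H s = s) (hs' : H (H' s) = H' s) (hidem : H' (H' s) = H' s)
    (hR : R (H' s) s) (j : I) (l : List I) :
    IsCube A R fun ε => if ∀ i ∈ l, ε i = true then (if ε j then s else H' s) else H' s := by
  induction l with
  | nil => simpa using IsCube.edge j hR
  | cons i l ih =>
    convert IsCube.twin i hH (Φ := fun _ => _) fun _ => ih using 2 with ε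
    simp only [List.forall_mem_cons]
    split_ifs <;> simp_all

theorem SupernilpotentCon.injOn [Finite A.carrier] (hα : SupernilpotentCon α)
    {h h' : A.carrier → A.carrier} (hh : UnaryTwin A α.r h h') {U : Set A.carrier}
    (hU : Set.MapsTo h U U) (hU' : Set.MapsTo h' U U) (hinj : Set.InjOn h U) :
    Set.InjOn h' U := by
  obtain ⟨m, hm⟩ := hα
  refine injOn_of_idemPow_eq_self fun s hs => ?_
  have hfix : ∀ x ∈ U, idemPow h x = x := fun x => idemPow_eq_self hU hinj
  have hcube := isCube_ite_forall_mem hh.symm.idemPow (hfix s hs) (hfix _ (mapsTo_idemPow hU' hs))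
    (idemPow_idemPow h' s) (by simpa [hfix s hs] using hh.symm.idemPow.rel (α.refl s))
    (Fin.last m) ((List.finRange m).map Fin.castSucc)
  have hbot := hm.rel_of_isCube hcube fun ε hε => by
    have : ¬ ∀ i, ε i = true := fun hall => hε (funext hall)
    simp [Con.bot, this]
  simpa [Con.bot] using hbot

end Uniformity

section Congruence

theorem rel_of_forall_rel_update {X B C : Type} [Finite X] [DecidableEq X] {E : C → C → Prop}
    (hrefl : ∀ c, E c c) (htrans : ∀ {a b c}, E a b → E b c → E a c) {F : (X → B) → C}
    {r : X → B → B → Prop}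
    (hF : ∀ v x c, r x (v x) c → E (F v) (F (Function.update v x c)))
    {v w : X → B} (hvw : ∀ x, r x (v x) (w x)) : E (F v) (F w) := by
  have := Fintype.ofFinite X
  have hybrid : ∀ s : Finset X, E (F v) (F (s.piecewise w v)) := by
    intro s
    induction s using Finset.induction_on with
    | empty => simpa using hrefl _
    | insert x s hx ih =>
      rw [Finset.piecewise_insert]
      refine htrans ih (hF _ _ _ ?_)
      rw [Finset.piecewise_eq_of_notMem _ _ _ hx]
      exact hvw x
  simpa using hybrid Finset.univ

variable {A : Algebra σ} {γ β δ : Con A}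

namespace Con

theorem ext {c d : Con A} (h : ∀ a b, c.r a b ↔ d.r a b) : c = d := by
  obtain ⟨r, _, _, _, _⟩ := c
  obtain ⟨s, _, _, _, _⟩ := d
  obtain rfl : r = s := funext fun a => funext fun b => propext (h a b)
  rfl

instance : PartialOrder (Con A) where
  le_refl _ _ _ h := h
  le_trans _ _ _ h h' a b hab := h' a b (h a b hab)
  le_antisymm _ _ h h' := ext fun a b => ⟨h a b, h' a b⟩
  lt_iff_le_not_ge _ _ := Iff.rfl

instance : OrderBot (Con A) where
  bot := bot
  bot_le c _ b h := h ▸ c.refl b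

instance : OrderTop (Con A) where
  top := top
  le_top _ _ _ _ := trivial

instance [Finite A.carrier] : Finite (Con A) :=
  Finite.of_injective Con.r fun c d h => ext fun a b => by rw [h]

theorem le_of_covBy (h : γ ⋖ β) (hle : γ ≤ δ) {p q : A.carrier} (hpq : β.r p q)
    (hn : ¬ γ.r p q) (hδ : δ.r p q) : β ≤ δ := by
  rcases h.eq_or_eq (c := inf β δ) (fun a b hab => ⟨h.le a b hab, hle a b hab⟩)
    (fun a b hab => hab.1) with heq | heq
  · exact absurd (heq ▸ (⟨hpq, hδ⟩ : (inf β δ).r p q)) hn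
  · exact fun a b hab => (heq.symm ▸ hab : (inf β δ).r a b).2

/-- The largest congruence contained in an equivalence relation. -/
def core (E : Setoid A.carrier) : Con A where
  r a b := ∀ f, UnaryPoly A f → E (f a) (f b)
  refl a f _ := E.refl (f a)
  symm h f hf := E.symm (h f hf)
  trans h h' f hf := E.trans (h f hf) (h' f hf)
  compat o x y h f hf := by
    classical
    refine rel_of_forall_rel_update (F := fun v => f (A.interp o v)) E.refl E.trans
      (r := fun _ a b => ∀ f, UnaryPoly A f → E (f a) (f b)) (fun v i c hc => ?_) h
    have hslice : UnaryPoly A fun a => f (A.interp o (Function.update v i a)) :=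
      Twin.update (hf.apply (.app o _ _ fun j => .proj j)) (fun _ => rfl) i
    simpa using hc _ hslice

theorem le_core {E : Setoid A.carrier} (h : ∀ a b, δ.r a b → E a b) : δ ≤ core E :=
  fun _ _ hab _ hf => h _ _ (hf.rel δ hab)

theorem core_le {E : Setoid A.carrier} {a b : A.carrier} (h : (core E).r a b) : E a b :=
  h (fun x => x) UnaryTwin.id

theorem rel_of_covBy_of_forall_unaryPoly (h : γ ⋖ β) {E : Setoid A.carrier}
    (hγ : ∀ a b, γ.r a b → E a b)
    {p q : A.carrier} (hpq : β.r p q) (hn : ¬ γ.r p q)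
    (hE : ∀ f, UnaryPoly A f → E (f p) (f q)) {a b : A.carrier} (hab : β.r a b) : E a b :=
  core_le (le_of_covBy h (le_core hγ) hpq hn hE a b hab)

theorem exists_poly_not_rel (h : γ ⋖ β) {p q : A.carrier} (hpq : β.r p q) (hn : ¬ γ.r p q)
    {f : A.carrier → A.carrier} (hf : UnaryPoly A f) {a b : A.carrier} (hab : β.r a b)
    (hfab : ¬ γ.r (f a) (f b)) :
    ∃ g, UnaryPoly A g ∧ β.r a (g p) ∧ ¬ γ.r (f (g p)) (f (g q)) := by
  by_contra! hcon
  let E : Setoid A.carrier :=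
    { r := fun x y => β.r x y ∧ (β.r a x → γ.r (f x) (f y))
      iseqv :=
        { refl := fun x => ⟨β.refl x, fun _ => γ.refl _⟩
          symm := fun h => ⟨β.symm h.1, fun hy => γ.symm (h.2 (β.trans hy (β.symm h.1)))⟩
          trans := fun h h' => ⟨β.trans h.1 h'.1, fun hx =>
            γ.trans (h.2 hx) (h'.2 (β.trans hx h.1))⟩ } }
  have hE : E a b := rel_of_covBy_of_forall_unaryPoly h (E := E)
    (fun x y hxy => ⟨h.le x y hxy, fun _ => hf.rel γ hxy⟩) hpq hn
    (fun g hg => ⟨hg.rel β hpq, fun hag => hcon g hg hag⟩) hab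
  exact hfab (hE.2 (β.refl a))

theorem exists_rel_not_rel (h : γ < β) : ∃ a b, β.r a b ∧ ¬ γ.r a b := by
  by_contra! hcon
  exact h.not_ge hcon

theorem exists_covBy_separating [Finite A.carrier] {x y : A.carrier} (hxy : x ≠ y) :
    ∃ γ β : Con A, γ ⋖ β ∧ β.r x y ∧ ¬ γ.r x y := by
  obtain ⟨γ, hγ⟩ := (Set.toFinite {c : Con A | ¬ c.r x y}).exists_maximal ⟨⊥, hxy⟩
  have hlt : γ < ⊤ := ⟨le_top, fun h => hγ.1 (h x y trivial)⟩
  obtain ⟨β, hcov, -⟩ := exists_covBy_le_of_lt hlt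
  exact ⟨γ, β, hcov, by_contra fun hn => hcov.lt.not_ge (hγ.2 hn hcov.le), hγ.1⟩

end Con

end Congruence

section MinimalSet

open Function (fixedPoints)

variable {A : Algebra σ} {γ β : Con A} {e : A.carrier → A.carrier}

/-- An idempotent unary polynomial `e` which does not collapse `β` into `γ` and whose range, the
minimal set `fixedPoints e`, is as small as possible. -/
structure IsMinimalIdempotent (γ β : Con A) (e : A.carrier → A.carrier) : Prop where
  poly : UnaryPoly A e
  idem : ∀ x, e (e x) = e x
  separates : ∃ a b, β.r a b ∧ ¬ γ.r (e a) (e b)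
  ncard_le : ∀ f, UnaryPoly A f → ∀ a b, β.r a b → ¬ γ.r (f a) (f b) →
    (Set.range e).ncard ≤ (Set.range f).ncard

theorem UnaryPoly.rel_of_rel_apply [Finite A.carrier] {f : A.carrier → A.carrier}
    (hf : UnaryPoly A f) {U : Set A.carrier} (hU : Set.MapsTo f U U) (hinj : Set.InjOn f U)
    {a b : A.carrier} (ha : a ∈ U) (hb : b ∈ U) (h : γ.r (f a) (f b)) : γ.r a b := by
  have := UnaryPoly.rel hf.invPow γ h
  rwa [invPow_apply, invPow_apply, idemPow_eq_self hU hinj ha, idemPow_eq_self hU hinj hb] at this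

/-- A polynomial `f` of least range separating a `β`-pair modulo `γ` can be followed by some `g`
such that `f ∘ g` permutes the range of `f`; a power of `f ∘ g` is then the required idempotent. -/
theorem exists_isMinimalIdempotent [Finite A.carrier] (hc : γ ⋖ β) :
    ∃ e, IsMinimalIdempotent γ β e := by
  obtain ⟨f, ⟨hf, a, b, hab, hfab⟩, hmin⟩ := Set.exists_min_image
    {f : A.carrier → A.carrier | UnaryPoly A f ∧ ∃ a b, β.r a b ∧ ¬ γ.r (f a) (f b)}
    (fun f => (Set.range f).ncard) (Set.toFinite _)
    ⟨fun x => x, UnaryTwin.id, Con.exists_rel_not_rel hc.lt⟩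
  obtain ⟨g, hg, -, hsep⟩ := Con.exists_poly_not_rel hc (hf.rel β hab) hfab hf hab hfab
  have hfg : UnaryPoly A (f ∘ g) := hf.comp hg
  have hmaps : Set.MapsTo (f ∘ g) (Set.range f) (Set.range f) := fun x _ => ⟨g x, rfl⟩
  have hinj : Set.InjOn (f ∘ g) (Set.range f) := by
    refine Set.injOn_of_ncard_image_eq (le_antisymm (Set.ncard_image_le (Set.toFinite _)) ?_)
      (Set.toFinite _)
    rw [← Set.range_comp]
    exact hmin _ ⟨hfg.comp hf, a, b, hab, hsep⟩
  have hfix : ∀ x, idemPow (f ∘ g) (f x) = f x := fun x => idemPow_eq_self hmaps hinj ⟨x, rfl⟩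
  refine ⟨idemPow (f ∘ g), hfg.idemPow, idemPow_idemPow _, ⟨f a, f b, hf.rel β hab, ?_⟩, ?_⟩
  · rwa [hfix, hfix]
  · intro f' hf' a b hab hab'
    refine (Set.ncard_le_ncard ?_ (Set.toFinite _)).trans (hmin f' ⟨hf', a, b, hab, hab'⟩)
    rintro _ ⟨x, rfl⟩
    rw [← apply_invPow]
    exact ⟨_, rfl⟩

namespace IsMinimalIdempotent

theorem apply_mem (he : IsMinimalIdempotent γ β e) (x : A.carrier) : e x ∈ fixedPoints e :=
  he.idem x

theorem injOn_or_collapses [Finite A.carrier] (he : IsMinimalIdempotent γ β e)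
    {f : A.carrier → A.carrier} (hf : UnaryPoly A f) :
    Set.InjOn f (fixedPoints e) ∨
      ∀ a ∈ fixedPoints e, ∀ b ∈ fixedPoints e, β.r a b → γ.r (f a) (f b) := by
  refine or_iff_not_imp_right.mpr fun hsep => ?_
  push Not at hsep
  obtain ⟨a, ha, b, hb, hab, hn⟩ := hsep
  have hrange : fixedPoints e = Set.range e :=
    Set.Subset.antisymm (fun x hx => ⟨x, hx⟩) (Set.range_subset_iff.mpr he.apply_mem)
  rw [hrange]
  refine Set.injOn_of_ncard_image_eq (le_antisymm (Set.ncard_image_le (Set.toFinite _)) ?_)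
    (Set.toFinite _)
  rw [← Set.range_comp]
  exact he.ncard_le _ (hf.comp he.poly) a b hab (by simpa [ha.eq, hb.eq] using hn)

theorem exists_poly_not_rel (he : IsMinimalIdempotent γ β e) (hc : γ ⋖ β) {p q : A.carrier}
    (hpq : β.r p q) (hn : ¬ γ.r p q) :
    ∃ f, UnaryPoly A f ∧ (∀ x, f x ∈ fixedPoints e) ∧ ¬ γ.r (f p) (f q) := by
  obtain ⟨a, b, hab, hsep⟩ := he.separates
  obtain ⟨g, hg, -, hs⟩ := Con.exists_poly_not_rel hc hpq hn he.poly hab hsep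
  exact ⟨fun x => e (g x), he.poly.comp hg, fun x => he.apply_mem _, hs⟩

theorem exists_mem_not_rel (he : IsMinimalIdempotent γ β e) :
    ∃ u ∈ fixedPoints e, ∃ v ∈ fixedPoints e, β.r u v ∧ ¬ γ.r u v := by
  obtain ⟨a, b, hab, hn⟩ := he.separates
  exact ⟨e a, he.apply_mem a, e b, he.apply_mem b, he.poly.rel β hab, hn⟩

end IsMinimalIdempotent

end MinimalSet

section PseudoMalcev

variable {A : Algebra σ} {α : Con A} {U : Set A.carrier} {u v : A.carrier}

/-- Some binary polynomial with values in `U` has both slices through `(u, u)` injective on `U`. -/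
def BiinjectiveAt (U : Set A.carrier) (u : A.carrier) : Prop :=
  ∃ p, BinaryPoly A p ∧ (∀ x y, p x y ∈ U) ∧ Set.InjOn (p · u) U ∧ Set.InjOn (p u) U

/-- A ternary polynomial on `U` which is Mal'cev when the repeated argument is `α`-related
to `u`. -/
structure IsPseudoMalcev (α : Con A) (U : Set A.carrier) (u : A.carrier)
    (M : A.carrier → A.carrier → A.carrier → A.carrier) : Prop where
  poly : TernaryPoly A M
  mem : ∀ x y z, M x y z ∈ U
  right : ∀ x ∈ U, ∀ y, α.r u y → M x y y = x
  left : ∀ y ∈ U, α.r u y → ∀ z ∈ U, M y y z = z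

variable [Finite A.carrier]

theorem BiinjectiveAt.of_rel (hα : SupernilpotentCon α) (h : BiinjectiveAt U u) (huv : α.r u v) :
    BiinjectiveAt U v := by
  obtain ⟨p, hp, hU, hleft, hright⟩ := h
  exact ⟨p, hp, hU, hα.injOn ((hp.twin α).col huv) (fun x _ => hU _ _) (fun x _ => hU _ _) hleft,
    hα.injOn ((hp.twin α).row huv) (fun x _ => hU _ _) (fun x _ => hU _ _) hright⟩

theorem BiinjectiveAt.exists_right_unital (h : BiinjectiveAt U u) :
    ∃ p, BinaryPoly A p ∧ (∀ x y, p x y ∈ U) ∧ (∀ x ∈ U, p x u = x) ∧ Set.InjOn (p u) U := by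
  obtain ⟨p, hp, hU, hleft, hright⟩ := h
  have hmaps : Set.MapsTo (p · u) U U := fun x _ => hU x u
  exact ⟨fun x y => invPow (p · u) (p x y), (hp.col rfl).invPow.apply hp,
    fun x y => mapsTo_invPow hmaps (hU x y),
    fun x hx => (invPow_apply (p · u) x).trans (idemPow_eq_self hmaps hleft hx),
    fun y hy y' hy' heq => hright hy hy' (injOn_invPow hmaps hleft (hU _ _) (hU _ _) heq)⟩

/-- For the group polynomial `p x y = x + y - u` the construction gives `x - y + z`: every slice of
`p` at a point `α`-related to `u` is invertible on `U`, and the inverses are polynomials. -/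
theorem BiinjectiveAt.exists_isPseudoMalcev (hα : SupernilpotentCon α) (hu : u ∈ U)
    (h : BiinjectiveAt U u) : ∃ M, IsPseudoMalcev α U u M := by
  obtain ⟨p, hp, hU, hpu, hinj⟩ := h.exists_right_unital
  have hpow_row : ∀ y, α.r u y → ∀ z ∈ U, idemPow (p y) z = z := fun y hy z hz =>
    idemPow_eq_self (fun z _ => hU y z)
      (hα.injOn ((hp.twin α).row hy) (fun x _ => hU _ _) (fun x _ => hU _ _) hinj) hz
  have hpow_col : ∀ w, α.r u w → ∀ x ∈ U, idemPow (p · w) x = x := fun w hw x hx =>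
    idemPow_eq_self (fun x _ => hU x w)
      (hα.injOn ((hp.twin α).col hw) (fun x _ => hU _ _) (fun x _ => hU _ _)
        fun x hx x' hx' heq => by simpa only [hpu x hx, hpu x' hx'] using heq) hx
  let ldiv : A.carrier → A.carrier → A.carrier := fun y => invPow (p y)
  let rdiv : A.carrier → A.carrier → A.carrier := fun x w => invPow (p · w) x
  have hldiv : BinaryPoly A ldiv := hp.invPow_right
  have hldiv_rel : ∀ y, α.r u y → α.r u (ldiv y y) := fun y hy => by
    have huu : ldiv u u = u := Function.iterate_fixed (hpu u hu) _
    simpa only [huu] using ((hldiv.twin α).row hy).rel hy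
  have hmul_ldiv : ∀ y, α.r u y → ∀ z ∈ U, p y (ldiv y z) = z := fun y hy z hz =>
    (apply_invPow (p y) z).trans (hpow_row y hy z hz)
  refine ⟨fun x y z => p (rdiv x (ldiv y y)) (ldiv y z), ?_, fun _ _ _ => hU _ _, ?_, ?_⟩
  · exact hp.apply (hp.invPow_left.apply (.proj 0) (hldiv.apply (.proj 1) (.proj 1)))
      (hldiv.apply (.proj 1) (.proj 2))
  · intro x hx y huy
    exact (apply_invPow (p · (ldiv y y)) x).trans (hpow_col _ (hldiv_rel y huy) x hx)
  · intro y hy huy z hz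
    have hrdiv : rdiv y (ldiv y y) = y := by
      have := (invPow_apply (p · (ldiv y y)) y).trans (hpow_col _ (hldiv_rel y huy) y hy)
      rwa [hmul_ldiv y huy y hy] at this
    rw [hrdiv, hmul_ldiv y huy z hz]

theorem IsPseudoMalcev.injOn {M : A.carrier → A.carrier → A.carrier → A.carrier}
    (hM : IsPseudoMalcev α U u M) (hα : SupernilpotentCon α) {y z : A.carrier}
    (huy : α.r u y) (huz : α.r u z) : Set.InjOn (M · y z) U := by
  have htwin : UnaryTwin A α.r (M · y y) (M · y z) :=
    (hM.poly.twin α).apply (.proj ()) (.const (α.refl y)) (.const (α.trans (α.symm huy) huz))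
  refine hα.injOn htwin (fun _ _ => hM.mem _ _ _) (fun _ _ => hM.mem _ _ _) ?_
  intro x hx x' hx' heq
  simpa only [hM.right x hx y huy, hM.right x' hx' y huy] using heq

end PseudoMalcev

section Transfer

open Function (fixedPoints)

variable {A : Algebra σ} {α β γ ρ : Con A} {a b u v : A.carrier}

/-- The term condition for twins in a single variable: coincidence modulo `γ` of two `ρ`-twins
at `a` forces their coincidence modulo `γ` at `b`. -/
def TransfersTwins (ρ γ : Con A) (a b : A.carrier) : Prop :=
  ∀ f f', UnaryTwin A ρ.r f f' → γ.r (f a) (f' a) → γ.r (f b) (f' b)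

theorem TransfersTwins.of_rel (h : γ.r a b) : TransfersTwins ρ γ a b := fun _ _ hf ha =>
  γ.trans (γ.symm (hf.left.rel γ h)) (γ.trans ha (hf.right.rel γ h))

theorem TransfersTwins.apply {f : A.carrier → A.carrier} (h : TransfersTwins ρ γ a b)
    (hf : UnaryPoly A f) : TransfersTwins ρ γ (f a) (f b) :=
  fun _ _ hg => h _ _ (hg.comp (hf.twin ρ))

theorem TransfersTwins.of_covBy (hc : γ ⋖ β) (huv : β.r u v) (hn : ¬ γ.r u v)
    (h : TransfersTwins ρ γ u v) (h' : TransfersTwins ρ γ v u) (hab : β.r a b) :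
    TransfersTwins ρ γ a b := by
  let E : Setoid A.carrier :=
    { r := fun x y => TransfersTwins ρ γ x y ∧ TransfersTwins ρ γ y x
      iseqv :=
        { refl := fun _ => ⟨fun _ _ _ h => h, fun _ _ _ h => h⟩
          symm := And.symm
          trans := fun h h' => ⟨fun f f' hf hx => h'.1 f f' hf (h.1 f f' hf hx),
            fun f f' hf hx => h.2 f f' hf (h'.2 f f' hf hx)⟩ } }
  have hE : E a b := Con.rel_of_covBy_of_forall_unaryPoly hc (E := E)
    (fun _ _ hxy => ⟨.of_rel hxy, .of_rel (γ.symm hxy)⟩) huv hn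
    (fun _ hf => ⟨h.apply hf, h'.apply hf⟩) hab
  exact hE.1

theorem TransfersTwins.rel_of_forall {X : Type} [Finite X] {f f' : (X → A.carrier) → A.carrier}
    (hf : Twin A ρ.r f f') {v w : X → A.carrier} (h : ∀ x, TransfersTwins ρ γ (v x) (w x))
    (hv : γ.r (f v) (f' v)) : γ.r (f w) (f' w) := by
  classical
  refine rel_of_forall_rel_update (F := fun w : X → A.carrier => w)
    (E := fun v w => γ.r (f v) (f' v) → γ.r (f w) (f' w))
    (r := fun _ a b => TransfersTwins ρ γ a b)
    (fun _ h => h) (fun h h' h'' => h' (h h'')) (fun v x c hc hv => ?_) h hv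
  exact hc _ _ (hf.update (fun y => ρ.refl (v y)) x) (by simpa using hv)

theorem UnaryTwin.induction [Finite A.carrier] {f f' : A.carrier → A.carrier}
    (hf : UnaryTwin A ρ.r f f') {P : (A.carrier → A.carrier) → Prop}
    (hP : ∀ p, BinaryPoly A p → ∀ y y', ρ.r y y' → P (p · y) → P (p · y')) (h : P f) : P f' := by
  classical
  obtain ⟨t, ht, ht'⟩ := Twin.exists_term hf
  obtain rfl : f = fun x => _ := funext fun x => ht fun _ => x
  obtain rfl : f' = fun x => _ := funext fun x => ht' fun _ => x
  refine rel_of_forall_rel_update (E := fun f f' => P f → P f') (r := fun _ => ρ.r)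
    (F := fun w x => t.eval A (Sum.elim (fun _ => x) w)) (fun _ h => h) (fun h h' h'' => h' (h h''))
    (fun w i c hc hw => ?_) (fun i => i.2) h
  refine hP (fun x y => t.eval A (Sum.elim (fun _ => x) (Function.update w i y))) ?_ _ _ hc
    (by simpa using hw)
  refine Twin.eval t
    (s := fun s v => Sum.elim (fun _ => v 0) (Function.update w i (v 1)) s)
    (s' := fun s v => Sum.elim (fun _ => v 0) (Function.update w i (v 1)) s) ?_
  rintro (_ | j)
  · exact .proj 0
  · obtain rfl | hj := eq_or_ne j i
    · simpa using Twin.proj (R := Eq) (1 : Fin 2)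
    · simpa [Function.update_of_ne hj] using Twin.const rfl

variable {e : A.carrier → A.carrier} [Finite A.carrier]

namespace IsMinimalIdempotent

theorem transfersTwins_of_forall_injOn (he : IsMinimalIdempotent γ β e) (hc : γ ⋖ β)
    (hα : SupernilpotentCon α) (hρ : ρ ≤ α) (hu : u ∈ fixedPoints e) (hv : v ∈ fixedPoints e)
    (huv : β.r u v)
    (h : ∀ f f', UnaryTwin A ρ.r f f' → (∀ x, f x ∈ fixedPoints e) → (∀ x, f' x ∈ fixedPoints e) →
      Set.InjOn f (fixedPoints e) → γ.r (f u) (f' u) → γ.r (f v) (f' v)) :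
    TransfersTwins ρ γ u v := by
  intro f f' hf hfu
  by_contra hfv
  have hβ : β.r (f v) (f' v) := β.trans (hf.left.rel β (β.symm huv))
    (β.trans (hc.le _ _ hfu) (hf.right.rel β huv))
  obtain ⟨k, hk, hkU, hkv⟩ := he.exists_poly_not_rel hc hβ hfv
  have htwin : UnaryTwin A ρ.r (fun x => k (f x)) (fun x => k (f' x)) := (hk.twin ρ).comp hf
  refine hkv (h _ _ htwin (fun _ => hkU _) (fun _ => hkU _) ?_ (hk.rel γ hfu))
  by_contra hninj
  have hninj' : ¬ Set.InjOn (fun x => k (f' x)) (fixedPoints e) := fun hinj =>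
    hninj (hα.injOn (htwin.mono hρ).symm (fun _ _ => hkU _) (fun _ _ => hkU _) hinj)
  have hcollapse := (he.injOn_or_collapses htwin.left).resolve_left hninj v hv u hu (β.symm huv)
  have hcollapse' := (he.injOn_or_collapses htwin.right).resolve_left hninj' u hu v hv huv
  exact hkv (γ.trans hcollapse (γ.trans (hk.rel γ hfu) hcollapse'))

/-- The polynomial `y ↦ M y y u` is constant on `{u, v}`, hence by uniformity its twin
`y ↦ M (f y) y u` is not injective and so collapses `β` into `γ`. -/
theorem rel_apply_of_isPseudoMalcev (he : IsMinimalIdempotent γ β e) (hα : SupernilpotentCon α)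
    (hβα : β ≤ α) (hu : u ∈ fixedPoints e) (hv : v ∈ fixedPoints e) (huv : β.r u v) (hne : u ≠ v)
    {M : A.carrier → A.carrier → A.carrier → A.carrier}
    (hM : IsPseudoMalcev α (fixedPoints e) u M) {i f : A.carrier → A.carrier}
    (hif : UnaryTwin A α.r i f) (hi : ∀ x ∈ fixedPoints e, i x = x)
    (hf : ∀ x ∈ fixedPoints e, f x ∈ fixedPoints e) (h : γ.r u (f u)) : γ.r v (f v) := by
  have hαuv := hβα _ _ huv
  have htwin : UnaryTwin A α.r (fun y => M (i y) y u) (fun y => M (f y) y u) :=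
    (hM.poly.twin α).apply hif (.proj ()) (.const (α.refl u))
  have hMu : M u u u = u := hM.left u hu (α.refl u) u hu
  have hMv : M v v u = u := hM.left v hv hαuv u hu
  have hninj : ¬ Set.InjOn (fun y => M (f y) y u) (fixedPoints e) := fun hinj =>
    hne (hα.injOn htwin.symm (fun _ _ => hM.mem _ _ _) (fun _ _ => hM.mem _ _ _) hinj hu hv
      (by simp only [hi u hu, hi v hv, hMu, hMv]))
  have hcollapse := (he.injOn_or_collapses htwin.right).resolve_left hninj u hu v hv huv
  have hfu : M (f u) u u = f u := hM.right _ (hf u hu) u (α.refl u)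
  have hslice : UnaryPoly A (M · v u) := hM.poly.apply (.proj ()) (.const rfl) (.const rfl)
  refine hslice.rel_of_rel_apply (fun _ _ => hM.mem _ _ _) (hM.injOn hα hαuv (α.refl u)) hv
    (hf v hv) ?_
  rw [hMv]
  exact γ.trans h (by simpa only [hfu] using hcollapse)

theorem transfersTwins_of_biinjectiveAt (he : IsMinimalIdempotent γ β e) (hc : γ ⋖ β)
    (hα : SupernilpotentCon α) (hβα : β ≤ α) (hu : u ∈ fixedPoints e) (hv : v ∈ fixedPoints e)
    (huv : β.r u v) (hne : u ≠ v) (h : BiinjectiveAt (fixedPoints e) u) :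
    TransfersTwins α γ u v := by
  obtain ⟨M, hM⟩ := h.exists_isPseudoMalcev hα hu
  refine he.transfersTwins_of_forall_injOn hc hα le_rfl hu hv huv fun f f' hf hU hU' hinj hfu => ?_
  have hmaps : Set.MapsTo f (fixedPoints e) (fixedPoints e) := fun x _ => hU x
  have hinv : ∀ x ∈ fixedPoints e, invPow f (f x) = x := fun x hx =>
    (invPow_apply f x).trans (idemPow_eq_self hmaps hinj hx)
  have hpow : UnaryPoly A (invPow f) := UnaryTwin.invPow hf.left
  refine hpow.rel_of_rel_apply (mapsTo_invPow hmaps) (injOn_invPow hmaps hinj) (hU v) (hU' v) ?_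
  rw [hinv v hv]
  refine he.rel_apply_of_isPseudoMalcev hα hβα hu hv huv hne hM ((hpow.twin α).comp hf) hinv
    (fun x _ => mapsTo_invPow hmaps (hU' x)) ?_
  simpa only [hinv u hu] using hpow.rel γ hfu

theorem transfersTwins_of_biinjectiveAt_of_rel (he : IsMinimalIdempotent γ β e) (hc : γ ⋖ β)
    (hα : SupernilpotentCon α) (hβα : β ≤ α) (hu : u ∈ fixedPoints e) (hv : v ∈ fixedPoints e)
    (huv : β.r u v) (hn : ¬ γ.r u v) (h : BiinjectiveAt (fixedPoints e) u) (hab : β.r a b) :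
    TransfersTwins α γ a b := by
  have hne : u ≠ v := fun heq => hn (heq ▸ γ.refl u)
  exact .of_covBy hc huv hn (he.transfersTwins_of_biinjectiveAt hc hα hβα hu hv huv hne h)
    (he.transfersTwins_of_biinjectiveAt hc hα hβα hv hu (β.symm huv) hne.symm
      (h.of_rel hα (hβα _ _ huv))) hab

theorem rel_of_not_biinjectiveAt (he : IsMinimalIdempotent γ β e) (hc : γ ⋖ β)
    (hα : SupernilpotentCon α) (hβα : β ≤ α) (hu : u ∈ fixedPoints e) (hv : v ∈ fixedPoints e)
    (huv : β.r u v) (hn : ¬ γ.r u v) (h : ¬ BiinjectiveAt (fixedPoints e) v)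
    {p : A.carrier → A.carrier → A.carrier} (hp : BinaryPoly A p)
    (hU : ∀ x y, p x y ∈ fixedPoints e) {y z : A.carrier} (hyz : β.r y z)
    (hinj : Set.InjOn (p · y) (fixedPoints e)) : γ.r (p v y) (p v z) := by
  by_contra hsep
  have hrow : UnaryPoly A (p v) := hp.row rfl
  obtain ⟨g, hg, hyg, hgsep⟩ := Con.exists_poly_not_rel hc huv hn hrow hyz hsep
  have hpg : BinaryPoly A fun x z => p x (g z) := hp.apply (.proj 0) (hg.apply (.proj 1))
  refine h ⟨fun x z => p x (g z), hpg, fun _ _ => hU _ _, ?_, ?_⟩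
  · exact hα.injOn ((hp.twin α).col (hβα _ _ (β.trans hyg (hg.rel β huv))))
      (fun _ _ => hU _ _) (fun _ _ => hU _ _) hinj
  · exact (he.injOn_or_collapses (hrow.comp hg)).resolve_right fun hcollapse =>
      hgsep (hcollapse u hu v hv huv)

theorem transfersTwins_of_not_biinjectiveAt (he : IsMinimalIdempotent γ β e) (hc : γ ⋖ β)
    (hα : SupernilpotentCon α) (hβα : β ≤ α) (hu : u ∈ fixedPoints e) (hv : v ∈ fixedPoints e)
    (huv : β.r u v) (hn : ¬ γ.r u v) (h : ¬ BiinjectiveAt (fixedPoints e) v) :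
    TransfersTwins β γ u v := by
  refine he.transfersTwins_of_forall_injOn hc hα hβα hu hv huv fun f f' hf hU hU' hinj _ => ?_
  have hfix : ∀ x, e (f x) = f x := hU
  have hfix' : ∀ x, e (f' x) = f' x := hU'
  suffices Set.InjOn (fun x => e (f' x)) (fixedPoints e) ∧ γ.r (f v) (e (f' v)) by
    rw [← hfix']
    exact this.2
  refine hf.induction
    (P := fun g => Set.InjOn (fun x => e (g x)) (fixedPoints e) ∧ γ.r (f v) (e (g v)))
    (fun p hp y z hyz hy => ?_) (by simpa only [hfix] using ⟨hinj, γ.refl _⟩)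
  have hep : BinaryPoly A fun x y => e (p x y) := he.poly.apply hp
  exact ⟨hα.injOn ((hep.twin α).col (hβα _ _ hyz)) (fun _ _ => he.apply_mem _)
    (fun _ _ => he.apply_mem _) hy.1, γ.trans hy.2
    (he.rel_of_not_biinjectiveAt hc hα hβα hu hv huv hn h hep (fun _ _ => he.apply_mem _) hyz hy.1)⟩

end IsMinimalIdempotent

theorem SupernilpotentCon.transfersTwins (hα : SupernilpotentCon α) (hβα : β ≤ α) (hc : γ ⋖ β)
    (hab : β.r a b) : TransfersTwins β γ a b := by
  obtain ⟨e, he⟩ := exists_isMinimalIdempotent hc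
  obtain ⟨u, hu, v, hv, huv, hn⟩ := he.exists_mem_not_rel
  by_cases h : BiinjectiveAt (fixedPoints e) u
  · exact fun f f' hf => he.transfersTwins_of_biinjectiveAt_of_rel hc hα hβα hu hv huv hn h hab
      f f' (hf.mono hβα)
  · have h' : ¬ BiinjectiveAt (fixedPoints e) v := fun hv =>
      h (hv.of_rel hα (α.symm (hβα _ _ huv)))
    exact .of_covBy hc huv hn
      (he.transfersTwins_of_not_biinjectiveAt hc hα hβα hu hv huv hn h')
      (he.transfersTwins_of_not_biinjectiveAt hc hα hβα hv hu (β.symm huv)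
        (fun hvu => hn (γ.symm hvu)) h) hab

end Transfer

section Solvability

variable {A : Algebra σ} {α β γ : Con A}

theorem chooseVec_lastCases {B : Type} {N n : ℕ} (g : Fin N → Fin (n + 1)) (a b : Fin N → B)
    (s t : Bool) :
    chooseVec g a b (Fin.lastCases (motive := fun _ => Bool) t fun _ => s) = fun i =>
      if g i = Fin.last n then (if t then b i else a i) else if s then b i else a i := by
  funext i
  rw [chooseVec]
  cases g i using Fin.lastCases <;> simp [(Fin.castSucc_lt_last _).ne]

theorem centralizes_of_transfersTwins (h : ∀ a b, α.r a b → TransfersTwins β γ a b) :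
    Centralizes (fun _ : Fin 1 => α) β γ := by
  intro N p hp g a b hab hε
  have htwin : Twin A β.r (fun w => p fun i => if g i = Fin.last 1 then a i else w i)
      (fun w => p fun i => if g i = Fin.last 1 then b i else w i) := by
    refine ((Poly.of_isPolynomial hp).twin β).subst fun i => ?_
    split_ifs with hi
    · refine .const ?_
      have := hab i
      rw [hi] at this
      simpa only [Fin.lastCases_last] using this
    · exact .proj i
  have hlow := hε (fun _ => false) fun h => by simpa using congrFun h 0
  simp only [chooseVec_lastCases, Bool.false_eq_true, if_true, if_false] at hlow ⊢
  have hcoord : ∀ i, TransfersTwins β γ (a i) (if g i = Fin.last 1 then a i else b i) := fun i => by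
    split_ifs with hi
    · exact .of_rel (γ.refl _)
    · obtain ⟨j, hj⟩ := Fin.exists_castSucc_eq.2 hi
      have := hab i
      rw [← hj] at this
      exact h _ _ (by simpa only [Fin.lastCases_castSucc] using this)
  convert TransfersTwins.rel_of_forall htwin hcoord (by simpa only [ite_self] using hlow)
    using 3 <;> split_ifs with hi <;> simp only [hi, if_false]

theorem exists_eq_bot_of_forall_lt {P : Type*} [PartialOrder P] [OrderBot P] [WellFoundedLT P]
    {s : ℕ → P} (h : ∀ n, s n ≠ ⊥ → s (n + 1) < s n) : ∃ n, s n = ⊥ := by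
  obtain ⟨_, ⟨n, rfl⟩, hmin⟩ := wellFounded_lt.has_min (Set.range s) ⟨s 0, 0, rfl⟩
  exact ⟨n, by_contra fun hn => hmin _ ⟨n + 1, rfl⟩ (h n hn)⟩

theorem binComm_le_right : binComm α β ≤ β := by
  refine fun a b hab => hab β fun N p hp g a b hr _ => ?_
  refine Twin.rel ((Poly.of_isPolynomial hp).twin β) fun i => ?_
  simp only [chooseVec_lastCases, Bool.false_eq_true, if_true, if_false]
  split_ifs with hi
  · have := hr i
    rw [hi] at this
    simpa only [Fin.lastCases_last] using this
  · exact β.refl _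

theorem binComm_lt [Finite A.carrier] (hβ : β ≠ ⊥)
    (h : ∀ γ, γ ⋖ β → ∀ a b, α.r a b → TransfersTwins β γ a b) : binComm α β < β := by
  obtain ⟨γ, -, hγ⟩ := exists_le_covBy_of_lt (bot_lt_iff_ne_bot.2 hβ)
  exact lt_of_le_of_lt (fun a b hab => hab γ (centralizes_of_transfersTwins (h γ hγ))) hγ.lt

theorem derived_le : ∀ n, derived α n ≤ α
  | 0 => le_rfl
  | n + 1 => binComm_le_right.trans (derived_le n)

theorem SupernilpotentCon.solvableCon [Finite A.carrier] (hα : SupernilpotentCon α) :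
    SolvableCon α :=
  exists_eq_bot_of_forall_lt fun n hn => binComm_lt hn fun _ hγ _ _ =>
    hα.transfersTwins (derived_le n) hγ

end Solvability

section Taylor

open Function (fixedPoints)

variable {A : Algebra σ} {β γ : Con A} {e : A.carrier → A.carrier} {a b u v : A.carrier}

theorem BiinjectiveAt.of_injOn_update {X : Type} [DecidableEq X] {U : Set A.carrier}
    {F : (X → A.carrier) → A.carrier} (hF : Poly A F) (hU : ∀ w, F w ∈ U) {i j : X} (hij : i ≠ j)
    {w : X → A.carrier} (hwi : w i = u) (hwj : w j = u)
    (hi : Set.InjOn (fun c => F (Function.update w i c)) U)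
    (hj : Set.InjOn (fun c => F (Function.update w j c)) U) : BiinjectiveAt U u := by
  refine ⟨fun c d => F (Function.update (Function.update w i c) j d), ?_, fun _ _ => hU _, ?_, ?_⟩
  · refine Twin.subst hF (s := fun x y => Function.update (Function.update w i (y 0)) j (y 1) x)
      (s' := fun x y => Function.update (Function.update w i (y 0)) j (y 1) x) fun x => ?_
    obtain rfl | hxj := eq_or_ne x j
    · simpa using Twin.proj (R := Eq) (1 : Fin 2)
    · obtain rfl | hxi := eq_or_ne x i
      · simpa [Function.update_of_ne hxj] using Twin.proj (R := Eq) (0 : Fin 2)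
      · simpa [Function.update_of_ne hxj, Function.update_of_ne hxi] using Twin.const rfl
  · have hupdate : ∀ c, Function.update (Function.update w i c) j u = Function.update w i c :=
      fun c => by rw [Function.update_eq_self_iff, Function.update_of_ne hij.symm, hwj]
    simpa only [hupdate] using hi
  · have hupdate : Function.update w i u = w := by rw [Function.update_eq_self_iff, hwi]
    simpa only [hupdate] using hj

theorem exists_forall_ne_not_injOn_update {X : Type} [Nonempty X] [DecidableEq X]
    {U : Set A.carrier} {F : (X → A.carrier) → A.carrier} (hF : Poly A F) (hU : ∀ w, F w ∈ U)
    (h : ¬ BiinjectiveAt U u) :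
    ∃ i, ∀ j, j ≠ i → ¬ Set.InjOn (fun c => F (Function.update (fun _ => u) j c)) U := by
  by_contra! hall
  obtain ⟨j, -, hj⟩ := hall (Classical.arbitrary X)
  obtain ⟨k, hkj, hk⟩ := hall j
  exact h (.of_injOn_update hF hU hkj rfl rfl hk hj)

/-- Every cover `γ ⋖ β` of congruences is central, `[1_A, β] ≤ γ`, expressed by the term condition
for twins. -/
def HasCentralCovers (A : Algebra σ) : Prop :=
  ∀ γ β : Con A, γ ⋖ β → ∀ a b, TransfersTwins β γ a b

theorem HasCentralCovers.rel (hA : HasCentralCovers A) (hc : γ ⋖ β) {X : Type} [Finite X]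
    {f f' : (X → A.carrier) → A.carrier} (hf : Twin A β.r f f') {v : X → A.carrier}
    (hv : γ.r (f v) (f' v)) (w : X → A.carrier) : γ.r (f w) (f' w) :=
  TransfersTwins.rel_of_forall hf (fun _ => hA γ β hc _ _) hv

variable [Finite A.carrier]

namespace IsMinimalIdempotent

theorem rel_update_of_not_injOn (he : IsMinimalIdempotent γ β e)
    (hA : SupernilpotentCon (⊤ : Con A)) {X : Type} [DecidableEq X]
    {F : (X → A.carrier) → A.carrier} (hF : Poly A F) (hU : ∀ w, F w ∈ fixedPoints e)
    {w₀ w : X → A.carrier} {j : X}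
    (hj : ¬ Set.InjOn (fun c => F (Function.update w₀ j c)) (fixedPoints e)) {c : A.carrier}
    (hwj : w j ∈ fixedPoints e) (hc : c ∈ fixedPoints e) (hwc : β.r (w j) c) :
    γ.r (F w) (F (Function.update w j c)) := by
  have htwin : UnaryTwin A (⊤ : Con A).r (fun c => F (Function.update w j c))
      (fun c => F (Function.update w₀ j c)) := (hF.twin ⊤).update (fun _ => trivial) j
  have hninj : ¬ Set.InjOn (fun c => F (Function.update w j c)) (fixedPoints e) :=
    fun h => hj (hA.injOn htwin (fun _ _ => hU _) (fun _ _ => hU _) h)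
  simpa using (he.injOn_or_collapses htwin.left).resolve_left hninj _ hwj _ hc hwc

theorem rel_of_forall_ne_not_injOn_update (he : IsMinimalIdempotent γ β e)
    (hA : SupernilpotentCon (⊤ : Con A)) {X : Type} [Finite X] [DecidableEq X]
    {F : (X → A.carrier) → A.carrier} (hF : Poly A F) (hU : ∀ w, F w ∈ fixedPoints e)
    {w₀ : X → A.carrier} {i : X}
    (hi : ∀ j, j ≠ i → ¬ Set.InjOn (fun c => F (Function.update w₀ j c)) (fixedPoints e))
    {w w' : X → A.carrier} (heq : w i = w' i) (hw : ∀ j, w j ∈ fixedPoints e)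
    (hw' : ∀ j, w' j ∈ fixedPoints e) (hβ : ∀ j, β.r (w j) (w' j)) : γ.r (F w) (F w') := by
  refine rel_of_forall_rel_update (F := F) (E := γ.r)
    (r := fun j c d => c ∈ fixedPoints e ∧ d ∈ fixedPoints e ∧ β.r c d ∧ (j = i → c = d))
    γ.refl γ.trans (fun w j c ⟨hwj, hc, hwc, hji⟩ => ?_)
    (fun j => ⟨hw j, hw' j, hβ j, fun hji => hji ▸ heq⟩)
  obtain hj | hj := eq_or_ne j i
  · rw [← hji hj, Function.update_eq_self]
    exact γ.refl _
  · exact he.rel_update_of_not_injOn hA hF hU (hi j hj) hwj hc hwc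

/-- If there were no such polynomial, the Taylor term would depend, modulo `γ` and on `{u, v}`, on a
single coordinate, against the Taylor identity for that coordinate. -/
theorem biinjectiveAt_of_hasTaylorTerm (he : IsMinimalIdempotent γ β e)
    (hA : SupernilpotentCon (⊤ : Con A)) (ht : HasTaylorTerm A) (hu : u ∈ fixedPoints e)
    (hv : v ∈ fixedPoints e) (huv : β.r u v) (hn : ¬ γ.r u v) :
    BiinjectiveAt (fixedPoints e) u := by
  obtain ⟨n, t, hpos, hid, hty⟩ := ht
  have : Nonempty (Fin n) := ⟨⟨0, hpos⟩⟩
  by_contra hbi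
  have hF : Poly A fun w => e (t.eval A w) := he.poly.apply (Twin.eval t fun i => .proj i)
  have hU : ∀ w, e (t.eval A w) ∈ fixedPoints e := fun _ => he.apply_mem _
  obtain ⟨i, hi⟩ := exists_forall_ne_not_injOn_update hF hU hbi
  obtain ⟨s, s', hs, hs', htaylor⟩ := hty i
  have hmem : ∀ (s : Fin n → Bool) j, (if s j then v else u) ∈ fixedPoints e :=
    fun s j => by split_ifs <;> assumption
  have hβ : ∀ (s : Fin n → Bool) j, β.r u (if s j then v else u) := fun s j => by
    split_ifs
    exacts [huv, β.refl u]
  have hleft := he.rel_of_forall_ne_not_injOn_update hA hF hU hi (w := fun _ => v)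
    (w' := fun j => if s j then v else u) (by simp [hs]) (fun _ => hv) (hmem s)
    (fun j => β.trans (β.symm huv) (hβ s j))
  have hright := he.rel_of_forall_ne_not_injOn_update hA hF hU hi (w := fun _ => u)
    (w' := fun j => if s' j then v else u) (by simp [hs']) (fun _ => hu) (hmem s') (hβ s')
  rw [hid, hv.eq, htaylor] at hleft
  rw [hid, hu.eq] at hright
  exact hn (γ.trans hright (γ.symm hleft))

end IsMinimalIdempotent

theorem HasCentralCovers.nilpotent (hA : HasCentralCovers A) : Nilpotent A :=
  exists_eq_bot_of_forall_lt fun _ hn => binComm_lt hn fun _ hγ a b _ => hA _ _ hγ a b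

namespace HasTaylorTerm

theorem transfersTwins_top (ht : HasTaylorTerm A) (hA : SupernilpotentCon (⊤ : Con A))
    (hc : γ ⋖ β) (hab : β.r a b) : TransfersTwins ⊤ γ a b := by
  obtain ⟨e, he⟩ := exists_isMinimalIdempotent hc
  obtain ⟨u, hu, v, hv, huv, hn⟩ := he.exists_mem_not_rel
  exact he.transfersTwins_of_biinjectiveAt_of_rel hc hA le_top hu hv huv hn
    (he.biinjectiveAt_of_hasTaylorTerm hA ht hu hv huv hn) hab

theorem exists_difference_poly (ht : HasTaylorTerm A) (hA : SupernilpotentCon (⊤ : Con A))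
    (hc : γ ⋖ β) (hab : β.r a b) (hn : ¬ γ.r a b) :
    ∃ q o, BinaryPoly A q ∧ (∀ x, q x x = o) ∧ ¬ γ.r (q a b) o := by
  obtain ⟨e, he⟩ := exists_isMinimalIdempotent hc
  obtain ⟨u, hu, v, hv, huv, huvn⟩ := he.exists_mem_not_rel
  obtain ⟨M, hM⟩ :=
    (he.biinjectiveAt_of_hasTaylorTerm hA ht hu hv huv huvn).exists_isPseudoMalcev hA hu
  obtain ⟨k, hk, hkU, hkn⟩ := he.exists_poly_not_rel hc hab hn
  have hleft : ∀ x, M (k x) (k x) u = u := fun x => hM.left _ (hkU x) trivial u hu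
  have hslice : UnaryPoly A (M · (k b) u) := hM.poly.apply (.proj ()) (.const rfl) (.const rfl)
  refine ⟨fun x y => M (k x) (k y) u, u,
    hM.poly.apply (hk.apply (.proj 0)) (hk.apply (.proj 1)) (.const rfl), hleft, fun h => hkn ?_⟩
  refine UnaryPoly.rel_of_rel_apply hslice (fun _ _ => hM.mem _ _ _)
    (hM.injOn hA trivial trivial) (hkU a) (hkU b) ?_
  rwa [hleft b]

theorem hasCentralCovers (ht : HasTaylorTerm A) (hA : SupernilpotentCon (⊤ : Con A)) :
    HasCentralCovers A := by
  intro γ β hc a b f f' hf hfa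
  by_contra hfb
  obtain ⟨q, o, hq, hqo, hn⟩ := ht.exists_difference_poly hA hc
    (hf.symm.rel (β.refl b)) fun h => hfb (γ.symm h)
  have hf₀ : UnaryPoly A f := hf.left
  have htwin : UnaryTwin A β.r (fun x => q (f x) (f x)) (fun x => q (f' x) (f x)) :=
    (hq.twin β).apply hf (hf₀.twin β)
  have htransfer : γ.r (q (f' a) (f a)) (q (f' b) (f b)) := by
    refine htwin.induction (P := fun g => γ.r (g a) (g b)) (fun p hp y y' hy h => ?_)
      (by simpa only [hqo] using γ.refl o)
    exact ht.transfersTwins_top hA hc hy _ _ ((hp.twin ⊤).row trivial) h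
  have ha : γ.r (q (f' a) (f a)) o := by
    have := ((hq.twin γ).col (γ.refl (f a))).rel (γ.symm hfa)
    rwa [hqo] at this
  exact hn (γ.trans (γ.symm htransfer) ha)

theorem rel_of_eq_of_eq_of_eq (ht : HasTaylorTerm A) (hA : SupernilpotentCon (⊤ : Con A))
    (hc : γ ⋖ β) {X : Type} [Finite X] {F F' G G' : (X → A.carrier) → A.carrier}
    (hF : Twin A β.r F F') (hG : Twin A β.r G G') {v w : X → A.carrier} (h : F v = G v)
    (h' : F' v = G' v) (hw : F w = G w) : γ.r (F' w) (G' w) := by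
  by_contra hn
  have hβ : β.r (F' w) (G' w) := by
    have hFw := hF.rel fun x => β.refl (w x)
    have hGw := hG.rel fun x => β.refl (w x)
    exact β.trans (β.symm hFw) (hw ▸ hGw)
  obtain ⟨q, o, hq, hqo, hqn⟩ := ht.exists_difference_poly hA hc hβ hn
  have htwin : Twin A β.r (fun v => q (F v) (G v)) (fun v => q (F' v) (G' v)) :=
    (hq.twin β).apply hF hG
  have := (ht.hasCentralCovers hA).rel hc htwin (v := v)
    (by simpa only [h, h', hqo] using γ.refl o) w
  rw [hw, hqo] at this
  exact hqn (γ.symm this)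

end HasTaylorTerm

end Taylor

section Gluing

variable {A : Algebra σ} {γ β : Con A}

/-- Every basic operation `f` satisfies `f x ⋯ x = x`. -/
def IsIdempotent (A : Algebra σ) : Prop :=
  ∀ (o : σ.ops) (x : A.carrier), A.interp o (fun _ => x) = x

theorem TermOp.apply_diagonal {X : Type} {f f' : (X → A.carrier) → A.carrier}
    (h : Twin A (fun _ _ => False) f f') (hid : IsIdempotent A) (x : A.carrier) :
    f (fun _ => x) = x := by
  induction h with
  | proj _ => rfl
  | const h => exact h.elim
  | app o _ _ _ ih => simp only [ih, hid o]

theorem BinaryTermOp.apply_diagonal {b : A.carrier → A.carrier → A.carrier}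
    (hb : BinaryTermOp A b) (hid : IsIdempotent A) (x : A.carrier) : b x x = x :=
  TermOp.apply_diagonal hb hid x

theorem TernaryTermOp.apply_diagonal {d : A.carrier → A.carrier → A.carrier → A.carrier}
    (hd : TernaryTermOp A d) (hid : IsIdempotent A) (x : A.carrier) : d x x x = x :=
  TermOp.apply_diagonal hd hid x

variable [Finite A.carrier] {b : A.carrier → A.carrier → A.carrier} {x x' y : A.carrier}

theorem HasCentralCovers.rel_idemPowLeft_idemPowLeft (hA : HasCentralCovers A)
    (hid : IsIdempotent A) (hc : γ ⋖ β) (hb : BinaryTermOp A b) (hx : β.r x x') (w : A.carrier) :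
    γ.r (idemPowLeft b (idemPowLeft b w x') x) (idemPowLeft b w x) := by
  have hE : BinaryTermOp A (idemPowLeft b) := hb.idemPowLeft
  have hidem : ∀ w s, idemPowLeft b (idemPowLeft b w s) s = idemPowLeft b w s := fun w s =>
    idemPow_idemPow (b · s) w
  have htwin : UnaryTwin A β.r (fun w => idemPowLeft b (idemPowLeft b w x') x)
      (fun w => idemPowLeft b (idemPowLeft b w x) x) :=
    (hE.twin _).apply ((hE.twin _).apply (.proj ()) (.const (β.symm hx))) (.const (β.refl x))
  simpa only [hidem] using hA γ β hc x' w _ _ htwin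
    (by simpa only [hidem, hE.apply_diagonal hid] using γ.refl _)

/-- With `E = idemPowLeft b`, centrality links `x` to `x'` through the chain
`x`, `E (b x' x) x'`, `E x x'`, `x'`. -/
theorem HasCentralCovers.rel_of_rel_idemPowLeft (hA : HasCentralCovers A) (hid : IsIdempotent A)
    (hc : γ ⋖ β) (hb : BinaryTermOp A b) (hx : β.r x x')
    (h : γ.r (idemPowLeft b (b x y) x) (idemPowLeft b (b x' y) x')) : γ.r x x' := by
  set E := idemPowLeft b
  have hE : BinaryTermOp A E := hb.idemPowLeft
  have hbx : UnaryPoly A (b · x) := (hb.twin Eq).col rfl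
  have hbb : ∀ x, b x x = x := hb.apply_diagonal hid
  have hEE : ∀ x, E x x = x := hE.apply_diagonal hid
  have hx₁ : γ.r x (E (b x' x) x') := by
    have htwin : UnaryTwin A β.r (fun y => E (b x y) x) (fun y => E (b x' y) x') :=
      (hE.twin _).apply ((hb.twin _).row hx) (.const hx)
    simpa only [hbb, hEE] using hA γ β hc y x _ _ htwin h
  have hx₂ : γ.r x (E (b x' x) x) := by
    have := ((hE.twin γ.r).col (γ.refl x)).rel hx₁
    rw [hEE] at this
    exact γ.trans this (hA.rel_idemPowLeft_idemPowLeft hid hc hb hx _)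
  have hx₃ : γ.r x (E x' x) := by
    have hinv : invPow (b · x) x = x := Function.iterate_fixed (f := (b · x)) (hbb x) _
    have := UnaryPoly.rel hbx.invPow γ hx₂
    rwa [hinv, show invPow (b · x) (E (b x' x) x) = E x' x from invPow_idemPow_apply _ _] at this
  have hx' : γ.r (E x x') x' := by
    simpa only [hEE] using hA γ β hc x x' _ _ ((hE.twin β.r).row hx) (by simpa only [hEE] using hx₃)
  have hxb : β.r x (b x' x) := by simpa only [hbb] using (hbx.twin β).rel hx
  have hx'' : γ.r (E x x') (E (b x' x) x') :=
    hA γ β hc x x' _ _ ((hE.twin β.r).row hxb) (by simpa only [hEE] using hx₂)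
  exact γ.trans hx₁ (γ.trans (γ.symm hx'') hx')

theorem HasCentralCovers.injective_idemPowLeft (hA : HasCentralCovers A) (hid : IsIdempotent A)
    (hb : BinaryTermOp A b) (y : A.carrier) :
    Function.Injective fun x => idemPowLeft b (b x y) x := by
  intro x x' heq
  by_contra hne
  obtain ⟨γ, β, hc, hβ, hγ⟩ := Con.exists_covBy_separating hne
  have hγ' : γ.r (idemPowLeft b (b x y) x) (idemPowLeft b (b x' y) x') := by
    rw [show idemPowLeft b (b x y) x = _ from heq]
    exact γ.refl _
  exact hγ (hA.rel_of_rel_idemPowLeft hid hc hb hβ hγ')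

end Gluing

section RightMalcev

open Function (fixedPoints)

variable {A : Algebra σ} {γ β : Con A} {e : A.carrier → A.carrier}

/-- A ternary term operation satisfying the first of the two Mal'cev identities. -/
structure RightMalcevOp (A : Algebra σ) (d : A.carrier → A.carrier → A.carrier → A.carrier) :
    Prop where
  termOp : TernaryTermOp A d
  right : ∀ x y, d x y y = x

namespace RightMalcevOp

variable {d d' : A.carrier → A.carrier → A.carrier → A.carrier}

theorem proj : RightMalcevOp A fun x _ _ => x := ⟨Twin.proj 0, fun _ _ => rfl⟩

theorem comp (hd : RightMalcevOp A d) (hd' : RightMalcevOp A d') :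
    RightMalcevOp A fun x y z => d' (d x y z) (d y y z) z where
  termOp := hd'.termOp.apply hd.termOp (hd.termOp.apply (.proj 1) (.proj 1) (.proj 2)) (.proj 2)
  right x y := by rw [hd.right, hd.right, hd'.right]

theorem comp_left (hd : RightMalcevOp A d) (hd' : RightMalcevOp A d') :
    RightMalcevOp A fun x y z => d' (d x y z) y z where
  termOp := hd'.termOp.apply hd.termOp (.proj 1) (.proj 2)
  right x y := by rw [hd.right, hd'.right]

theorem invPow_comp_left (hd : RightMalcevOp A d) (hd' : RightMalcevOp A d') :
    RightMalcevOp A fun x y z => invPow (d' · y z) (d x y z) where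
  termOp := Twin.iterate (F := fun v w => d' w (v 1) (v 2)) (F' := fun v w => d' w (v 1) (v 2))
    (fun _ _ ha => hd'.termOp.apply ha (.proj 1) (.proj 2)) _ hd.termOp
  right x y := by
    rw [hd.right]
    exact Function.iterate_fixed (f := (d' · y y)) (hd'.right x y) _

theorem unaryPoly (hd : RightMalcevOp A d) (y z : A.carrier) : UnaryPoly A (d · y z) :=
  (hd.termOp.twin Eq).apply (.proj ()) (.const rfl) (.const rfl)

theorem injective [Finite A.carrier] (hd : RightMalcevOp A d)
    (hA : SupernilpotentCon (⊤ : Con A)) (y z : A.carrier) : Function.Injective (d · y z) := by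
  have htwin : UnaryTwin A (⊤ : Con A).r (d · y y) (d · y z) :=
    (hd.termOp.twin _).apply (.proj ()) (.const trivial) (.const trivial)
  refine Set.injOn_univ.mp (hA.injOn htwin (Set.mapsTo_univ _ _) (Set.mapsTo_univ _ _) ?_)
  intro x _ x' _ heq
  simpa only [hd.right] using heq

theorem of_injective [Finite A.carrier] {s : A.carrier → A.carrier → A.carrier → A.carrier}
    (hs : TernaryTermOp A s) (hinj : ∀ y, Function.Injective fun x => s x y y) :
    RightMalcevOp A fun x y z => invPow (fun x => s x y y) (s x y z) where
  termOp := Twin.iterate (F := fun v w => s w (v 1) (v 1)) (F' := fun v w => s w (v 1) (v 1))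
    (fun _ _ ha => hs.apply ha (.proj 1) (.proj 1)) _ hs
  right x y := (invPow_apply (fun x => s x y y) x).trans
    (idemPow_eq_self (Set.mapsTo_univ _ _) (hinj y).injOn (Set.mem_univ x))

end RightMalcevOp

/-- Term operations `P x a` with a variable `x` and further variables indexed by the elements of
`A`; these are placeholders for the constants of the polynomial `P · id`. -/
def UnaryParamOp (A : Algebra σ) (P : A.carrier → (A.carrier → A.carrier) → A.carrier) : Prop :=
  TermOp A (X := Unit ⊕ A.carrier) fun v => P (v (.inl ())) fun a => v (.inr a)

/-- The analogue of `UnaryParamOp` for binary polynomials. -/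
def BinaryParamOp (A : Algebra σ)
    (P : A.carrier → A.carrier → (A.carrier → A.carrier) → A.carrier) : Prop :=
  TermOp A (X := Fin 2 ⊕ A.carrier) fun v => P (v (.inl 0)) (v (.inl 1)) fun a => v (.inr a)

section ParamOp

variable {R : A.carrier → A.carrier → Prop} {X : Type} {g g' h h' : (X → A.carrier) → A.carrier}
  {w w' : A.carrier → (X → A.carrier) → A.carrier}

theorem UnaryParamOp.apply {P : A.carrier → (A.carrier → A.carrier) → A.carrier}
    (hP : UnaryParamOp A P) (hg : Twin A R g g') (hw : ∀ a, Twin A R (w a) (w' a)) :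
    Twin A R (fun v => P (g v) fun a => w a v) (fun v => P (g' v) fun a => w' a v) := by
  refine (TermOp.twin hP R).subst (s := Sum.elim (fun _ => g) w)
    (s' := Sum.elim (fun _ => g') w') ?_
  rintro (_ | a)
  exacts [hg, hw a]

theorem BinaryParamOp.apply {P : A.carrier → A.carrier → (A.carrier → A.carrier) → A.carrier}
    (hP : BinaryParamOp A P) (hg : Twin A R g g') (hh : Twin A R h h')
    (hw : ∀ a, Twin A R (w a) (w' a)) :
    Twin A R (fun v => P (g v) (h v) fun a => w a v)
      (fun v => P (g' v) (h' v) fun a => w' a v) := by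
  refine (TermOp.twin hP R).subst (s := Sum.elim ![g, h] w) (s' := Sum.elim ![g', h'] w') ?_
  rintro (i | a)
  · fin_cases i <;> assumption
  · exact hw a

theorem UnaryParamOp.apply_diagonal {P : A.carrier → (A.carrier → A.carrier) → A.carrier}
    (hP : UnaryParamOp A P) (hid : IsIdempotent A) (x : A.carrier) : P x (fun _ => x) = x :=
  TermOp.apply_diagonal hP hid x

theorem BinaryParamOp.apply_diagonal
    {P : A.carrier → A.carrier → (A.carrier → A.carrier) → A.carrier}
    (hP : BinaryParamOp A P) (hid : IsIdempotent A) (x : A.carrier) : P x x (fun _ => x) = x :=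
  TermOp.apply_diagonal hP hid x

theorem UnaryPoly.exists_paramOp {f : A.carrier → A.carrier} (hf : UnaryPoly A f) :
    ∃ P, UnaryParamOp A P ∧ ∀ x, f x = P x id := by
  obtain ⟨t, ht⟩ := Poly.exists_term hf
  refine ⟨fun x a => t.eval A (Sum.elim (fun _ => x) a), ?_, fun x => ht fun _ => x⟩
  suffices h : ∀ y, TermOp A (X := Unit ⊕ A.carrier)
      fun v => Sum.elim (fun _ => v (.inl ())) (fun a => v (.inr a)) y from Twin.eval t h
  rintro (_ | a)
  exacts [.proj _, .proj _]

theorem BinaryPoly.exists_paramOp {p : A.carrier → A.carrier → A.carrier} (hp : BinaryPoly A p) :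
    ∃ P, BinaryParamOp A P ∧ ∀ x y, p x y = P x y id := by
  obtain ⟨t, ht⟩ := Poly.exists_term hp
  refine ⟨fun x y a => t.eval A (Sum.elim ![x, y] a), ?_, fun x y => ht ![x, y]⟩
  suffices h : ∀ y, TermOp A (X := Fin 2 ⊕ A.carrier)
      fun v => Sum.elim ![v (.inl 0), v (.inl 1)] (fun a => v (.inr a)) y from Twin.eval t h
  rintro (i | a)
  · fin_cases i
    exacts [.proj _, .proj _]
  · exact .proj _

end ParamOp

end RightMalcev

section RightMalcevValues

variable {A : Algebra σ} {γ β : Con A} {u v w z : A.carrier}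

/-- The Mal'cev operation `M x y z` is sought as `P x z ȳ` with the constants of a binary polynomial
replaced by `y`; the injectivity of `HasCentralCovers.injective_idemPowLeft` corrects it to satisfy
`M x y y = x`. -/
theorem BinaryParamOp.exists_rightMalcevOp [Finite A.carrier]
    {P : A.carrier → A.carrier → (A.carrier → A.carrier) → A.carrier} (hP : BinaryParamOp A P)
    (hA : HasCentralCovers A) (hid : IsIdempotent A) :
    ∃ d, RightMalcevOp A d ∧ ∀ (γ : Con A) u v, γ.r (d u u v) u →
      γ.r (idemPow (fun x => P x u fun _ => u) (P u v fun _ => u)) u := by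
  let b : A.carrier → A.carrier → A.carrier := fun x y => P x y fun _ => y
  have hb : BinaryTermOp A b := hP.apply (.proj 0) (.proj 1) fun _ => .proj 1
  let s : A.carrier → A.carrier → A.carrier → A.carrier := fun x y z =>
    idemPowLeft b (P x z fun _ => y) x
  have hs : TernaryTermOp A s :=
    hb.idemPowLeft.apply (hP.apply (.proj 0) (.proj 2) fun _ => .proj 1) (.proj 0)
  have hinj : ∀ y, Function.Injective fun x => s x y y := hA.injective_idemPowLeft hid hb
  refine ⟨_, RightMalcevOp.of_injective hs hinj, fun γ u v h => ?_⟩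
  have hsu : UnaryPoly A fun x => s x u u :=
    (hs.twin Eq).apply (.proj ()) (.const rfl) (.const rfl)
  have h' := UnaryPoly.rel hsu γ h
  rwa [apply_invPow (fun x => s x u u),
    idemPow_eq_self (Set.mapsTo_univ _ _) (hinj u).injOn (Set.mem_univ _),
    hs.apply_diagonal hid] at h'

/-- The values `d w w z` of operations `d` with `d x y y = x`, modulo `γ`.  A Mal'cev operation is
one for which `z` itself is among them. -/
def IsRightMalcevValue (γ : Con A) (w z a : A.carrier) : Prop :=
  ∃ d, RightMalcevOp A d ∧ γ.r (d w w z) a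

theorem IsRightMalcevValue.congr {a b : A.carrier} (hab : γ.r a b) :
    IsRightMalcevValue γ w z a ↔ IsRightMalcevValue γ w z b :=
  ⟨fun ⟨d, hd, h⟩ => ⟨d, hd, γ.trans h hab⟩, fun ⟨d, hd, h⟩ => ⟨d, hd, γ.trans h (γ.symm hab)⟩⟩

variable [Finite A.carrier]

theorem BiinjectiveAt.exists_rightMalcevOp_not_rel {U : Set A.carrier} (h : BiinjectiveAt U u)
    (hA : HasCentralCovers A) (hid : IsIdempotent A) (hc : γ ⋖ β) (hu : u ∈ U) (hv : v ∈ U)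
    (huv : β.r u v) (hn : ¬ γ.r u v) : ∃ d, RightMalcevOp A d ∧ ¬ γ.r (d u u v) u := by
  obtain ⟨p, hp, hU, hleft, hright⟩ := h
  obtain ⟨P, hP, hpP⟩ := BinaryPoly.exists_paramOp hp
  obtain ⟨d, hd, hdP⟩ := hP.exists_rightMalcevOp hA hid
  refine ⟨d, hd, fun h => hn ?_⟩
  have htwin : Twin A β.r (X := A.carrier) (fun w => idemPow (P · u w) (P u v w))
      (fun w => idemPow (P · u w) (P u u w)) := by
    have hP' : ∀ {c c' : A.carrier}, β.r c c' →
        ∀ a a' : ((A.carrier → A.carrier) → A.carrier), Twin A β.r a a' →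
        Twin A β.r (fun w => P (a w) c w) (fun w => P (a' w) c' w) :=
      fun hc _ _ ha => hP.apply ha (.const hc) fun i => .proj i
    exact Twin.iterate (F := fun w x => P x u w) (F' := fun w x => P x u w) (hP' (β.refl u)) _
      (hP' (β.symm huv) _ _ (.const (β.refl u)))
  have hdiag : γ.r (idemPow (P · u fun _ => u) (P u v fun _ => u))
      (idemPow (P · u fun _ => u) (P u u fun _ => u)) := by
    rw [hP.apply_diagonal hid, show idemPow (P · u fun _ => u) u = u from
      Function.iterate_fixed (hP.apply_diagonal hid u) _]
    exact hdP γ u v h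
  have hmoved := hA.rel hc htwin hdiag id
  have hfix : ∀ x ∈ U, idemPow (p · u) x = x := fun x =>
    idemPow_eq_self (fun _ _ => hU _ _) hleft
  simp only [← hpP, hfix _ (hU _ _)] at hmoved
  exact UnaryPoly.rel_of_rel_apply (hp.row rfl) (fun _ _ => hU _ _) hright hu hv (γ.symm hmoved)

theorem HasTaylorTerm.exists_rightMalcevOp_not_rel (ht : HasTaylorTerm A)
    (hA : SupernilpotentCon (⊤ : Con A)) (hid : IsIdempotent A) (hc : γ ⋖ β) (hwz : β.r w z)
    (hn : ¬ γ.r w z) : ∃ d, RightMalcevOp A d ∧ ¬ γ.r (d w w z) w := by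
  obtain ⟨e, he⟩ := exists_isMinimalIdempotent hc
  obtain ⟨k, hk, hkU, hkn⟩ := he.exists_poly_not_rel hc hwz hn
  have hkβ : β.r (k w) (k z) := hk.rel β hwz
  obtain ⟨d, hd, hdn⟩ := (he.biinjectiveAt_of_hasTaylorTerm hA ht (hkU w) (hkU z) hkβ
    hkn).exists_rightMalcevOp_not_rel (ht.hasCentralCovers hA) hid hc (hkU w) (hkU z) hkβ hkn
  obtain ⟨K, hK, hkK⟩ := UnaryPoly.exists_paramOp hk
  refine ⟨fun x y z => d x (K y fun _ => x) (K z fun _ => x), ⟨?_, fun x y => hd.right _ _⟩,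
    fun h => hdn ?_⟩
  · exact hd.termOp.apply (.proj 0) (hK.apply (.proj 1) fun _ => .proj 0)
      (hK.apply (.proj 2) fun _ => .proj 0)
  have htwin : Twin A β.r (X := Option A.carrier)
      (fun v => d (v none) (K w fun a => v (some a)) (K z fun a => v (some a)))
      (fun v => d (v none) (K w fun a => v (some a)) (K w fun a => v (some a))) :=
    (hd.termOp.twin _).apply (.proj none) (hK.apply (.const (β.refl w)) fun a => .proj (some a))
      (hK.apply (.const (β.symm hwz)) fun a => .proj (some a))
  have := (ht.hasCentralCovers hA).rel hc htwin (v := fun _ => w)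
    (by simpa only [hd.right] using h) fun o => o.elim (k w) id
  simpa only [Option.elim, hd.right, hkK] using this

theorem RightMalcevOp.isRightMalcevValue_apply_iff
    {d : A.carrier → A.carrier → A.carrier → A.carrier} {a : A.carrier} (hd : RightMalcevOp A d)
    (hA : SupernilpotentCon (⊤ : Con A)) :
    IsRightMalcevValue γ w z (d a w z) ↔ IsRightMalcevValue γ w z a := by
  have hpoly := hd.unaryPoly w z
  constructor
  · rintro ⟨d', hd', h⟩
    have h' := UnaryPoly.rel hpoly.invPow γ h
    rw [invPow_apply, idemPow_eq_self (Set.mapsTo_univ _ _) (hd.injective hA w z).injOn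
      (Set.mem_univ a)] at h'
    exact ⟨_, hd'.invPow_comp_left hd, h'⟩
  · rintro ⟨d', hd', h⟩
    exact ⟨_, hd'.comp_left hd, hpoly.rel γ h⟩

/-- Replacing the constants of `g` by `x` in `g (d x y z)` gives a right Mal'cev operation `d'`;
both sides agree modulo `γ` since they do for these placeholders. -/
theorem HasTaylorTerm.exists_rightMalcevOp_rel (ht : HasTaylorTerm A)
    (hA : SupernilpotentCon (⊤ : Con A)) (hid : IsIdempotent A) (hc : γ ⋖ β) (hwz : β.r w z)
    {d : A.carrier → A.carrier → A.carrier → A.carrier} (hd : RightMalcevOp A d)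
    {g : A.carrier → A.carrier} (hg : UnaryPoly A g) :
    ∃ d', RightMalcevOp A d' ∧ γ.r (g (d w w z)) (d' (g w) w z) := by
  obtain ⟨G, hG, hgG⟩ := UnaryPoly.exists_paramOp hg
  have hGid : ∀ x, G x (fun _ => x) = x := hG.apply_diagonal hid
  let d' : A.carrier → A.carrier → A.carrier → A.carrier := fun x y z => G (d x y z) fun _ => x
  have hd' : RightMalcevOp A d' :=
    ⟨hG.apply hd.termOp fun _ => .proj 0, fun x y => by simp only [d', hd.right, hGid]⟩
  have hleft : Twin A β.r (X := Option A.carrier)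
      (fun v => G (d (v none) w w) fun a => v (some a))
      (fun v => G (d (v none) w z) fun a => v (some a)) :=
    hG.apply ((hd.termOp.twin _).apply (.proj none) (.const (β.refl w)) (.const hwz))
      fun a => .proj (some a)
  have hright : Twin A β.r (X := Option A.carrier)
      (fun v => d' (G (v none) fun a => v (some a)) w w)
      (fun v => d' (G (v none) fun a => v (some a)) w z) :=
    (hd'.termOp.twin _).apply (hG.apply (.proj none) fun a => .proj (some a)) (.const (β.refl w))
      (.const hwz)
  have := ht.rel_of_eq_of_eq_of_eq hA hc hleft hright (v := fun _ => w)
    (w := fun o => o.elim w id) (by simp only [hd.right, hd'.right]) (by simp only [hGid, d'])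
    (by simp only [hd.right, hd'.right])
  exact ⟨d', hd', by simpa only [Option.elim, hgG] using this⟩

theorem HasTaylorTerm.isRightMalcevValue_of_covBy (ht : HasTaylorTerm A)
    (hA : SupernilpotentCon (⊤ : Con A)) (hid : IsIdempotent A) (hc : γ ⋖ β) (hwz : β.r w z) :
    IsRightMalcevValue γ w z z := by
  by_cases hn : γ.r w z
  · exact ⟨_, .proj, hn⟩
  obtain ⟨d, hd, hdn⟩ := ht.exists_rightMalcevOp_not_rel hA hid hc hwz hn
  have hwd : β.r w (d w w z) := by
    have hdw : UnaryPoly A (d w w ·) :=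
      (hd.termOp.twin Eq).apply (.const rfl) (.const rfl) (.proj ())
    simpa only [hd.right] using hdw.rel β hwz
  let E : Setoid A.carrier :=
    ⟨fun a b => IsRightMalcevValue γ w z a ↔ IsRightMalcevValue γ w z b,
      fun _ => Iff.rfl, Iff.symm, Iff.trans⟩
  have hE : E w z := by
    refine Con.rel_of_covBy_of_forall_unaryPoly hc (fun a b => IsRightMalcevValue.congr) hwd
      (fun h => hdn (γ.symm h)) (fun g hg => ?_) hwz
    obtain ⟨d', hd', h⟩ := ht.exists_rightMalcevOp_rel hA hid hc hwz hd hg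
    exact (hd'.isRightMalcevValue_apply_iff hA).symm.trans (IsRightMalcevValue.congr (γ.symm h))
  exact hE.mp ⟨_, .proj, γ.refl w⟩

theorem HasTaylorTerm.exists_rightMalcevOp_eq (ht : HasTaylorTerm A)
    (hA : SupernilpotentCon (⊤ : Con A)) (hid : IsIdempotent A) (w z : A.carrier) :
    ∃ d, RightMalcevOp A d ∧ d w w z = z := by
  obtain ⟨δ, hδ⟩ := (Set.toFinite {δ : Con A | IsRightMalcevValue δ w z z}).exists_minimal
    ⟨⊤, _, .proj, trivial⟩
  obtain ⟨d, hd, hdz⟩ := hδ.prop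
  obtain rfl | hlt := eq_or_ne δ ⊥
  · exact ⟨d, hd, hdz⟩
  obtain ⟨γ, -, hc⟩ := exists_le_covBy_of_lt (bot_lt_iff_ne_bot.mpr hlt)
  obtain ⟨d', hd', hdz'⟩ := ht.isRightMalcevValue_of_covBy hA hid hc hdz
  exact absurd ⟨_, hd.comp hd', hdz'⟩ (hδ.not_prop_of_lt hc.lt)

theorem HasTaylorTerm.exists_rightMalcevOp_forall_eq (ht : HasTaylorTerm A)
    (hA : SupernilpotentCon (⊤ : Con A)) (hid : IsIdempotent A) :
    ∃ d, RightMalcevOp A d ∧ ∀ y z, d y y z = z := by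
  classical
  have := Fintype.ofFinite A.carrier
  suffices h : ∀ s : Finset (A.carrier × A.carrier),
      ∃ d, RightMalcevOp A d ∧ ∀ q ∈ s, d q.1 q.1 q.2 = q.2 by
    obtain ⟨d, hd, h⟩ := h Finset.univ
    exact ⟨d, hd, fun y z => h (y, z) (Finset.mem_univ _)⟩
  intro s
  induction s using Finset.induction_on with
  | empty => exact ⟨_, .proj, by simp⟩
  | insert q s _ ih =>
    obtain ⟨d, hd, hs⟩ := ih
    obtain ⟨d', hd', hq⟩ := ht.exists_rightMalcevOp_eq hA hid (d q.1 q.1 q.2) q.2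
    refine ⟨_, hd.comp hd', fun r hr => ?_⟩
    obtain rfl | hr := Finset.mem_insert.mp hr
    · exact hq
    · rw [hs r hr, hd'.right]

end RightMalcevValues

section Reduct

variable {A : Algebra σ} {n : ℕ}

/-- The signature with a single operation symbol, of arity `n`. -/
def Signature.single (n : ℕ) : Signature := ⟨Unit, fun _ => n⟩

/-- The reduct of `A` to the term operation of `t`.  For a Taylor term `t` it is idempotent, so the
Mal'cev term can be built in it. -/
def termReduct (A : Algebra σ) (t : Term σ (Fin n)) : Algebra (.single n) :=
  ⟨A.carrier, fun _ x => t.eval A x⟩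

theorem IsPolynomial.eval {N : ℕ} {X : Type} (t : Term σ X)
    {g : X → (Fin N → A.carrier) → A.carrier} (hg : ∀ x, IsPolynomial A (g x)) :
    IsPolynomial A fun v => t.eval A fun x => g x v := by
  induction t with
  | var x => exact hg x
  | app o t ih => exact .app o _ ih

variable {t : Term σ (Fin n)}

theorem IsPolynomial.of_termReduct {N : ℕ}
    {p : (Fin N → (termReduct A t).carrier) → (termReduct A t).carrier}
    (h : IsPolynomial (termReduct A t) p) : IsPolynomial (σ := σ) A p := by
  induction h with
  | proj i => exact .proj i
  | const a => exact .const (A := A) a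
  | app _ _ _ ih => exact .eval t ih

theorem TermOp.of_termReduct {X : Type}
    {f f' : (X → (termReduct A t).carrier) → (termReduct A t).carrier}
    (h : Twin (termReduct A t) (fun _ _ => False) f f') :
    Twin (σ := σ) A (fun _ _ => False) f f' := by
  induction h with
  | proj x => exact .proj x
  | const h => exact h.elim
  | app _ _ _ _ ih => exact .eval t ih

theorem SupernilpotentCon.termReduct_top (hA : SupernilpotentCon (⊤ : Con A))
    (t : Term σ (Fin n)) : SupernilpotentCon (⊤ : Con (termReduct A t)) := by
  obtain ⟨m, hm⟩ := hA
  refine ⟨m, fun N p hp g a b _ h => hm N p hp.of_termReduct g a b (fun i => ?_) h⟩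
  cases g i using Fin.lastCases with
  | last => rw [Fin.lastCases_last]; trivial
  | cast j => rw [Fin.lastCases_castSucc]; trivial

theorem HasTaylorTerm.hasMalcevTerm [Finite A.carrier] (ht : HasTaylorTerm A)
    (hA : SupernilpotentCon (⊤ : Con A)) : HasMalcevTerm A := by
  obtain ⟨n, t, hn, hid, hty⟩ := ht
  have : Finite (termReduct A t).carrier := ‹Finite A.carrier›
  have ht' : HasTaylorTerm (termReduct A t) :=
    ⟨n, .app (σ := .single n) () .var, hn, hid, hty⟩
  obtain ⟨d, hd, hleft⟩ :=
    ht'.exists_rightMalcevOp_forall_eq (hA.termReduct_top t) fun _ x => hid x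
  obtain ⟨s, hs⟩ := TermOp.exists_term (TermOp.of_termReduct hd.termOp)
  exact ⟨s, fun a b => ⟨(hs _).trans (hd.right a b), (hs _).trans (hleft b a)⟩⟩

end Reduct

/-- Corollary 4.4 of "On Supernilpotent Algebras": in a finite algebra every
supernilpotent congruence is solvable; consequently a finite supernilpotent
Taylor algebra has a Mal'cev term and is nilpotent. -/
theorem finite_supernilpotent_solvable {σ : Signature} (A : Algebra σ)
    (hfin : Finite A.carrier) :
    (∀ α : Con A, (∃ n, 2 ≤ n ∧ nfold α n = Con.bot) → SolvableCon α) ∧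
    ((∃ n, 2 ≤ n ∧ Supernilpotent A n) → HasTaylorTerm A →
      HasMalcevTerm A ∧ Nilpotent A) := by
  refine ⟨fun α ⟨_, hn, h⟩ => (SupernilpotentCon.of_nfold hn h).solvableCon, ?_⟩
  rintro ⟨_, hn, h⟩ ht
  have hA : SupernilpotentCon (⊤ : Con A) := .of_nfold hn h
  exact ⟨ht.hasMalcevTerm hA, (ht.hasCentralCovers hA).nilpotent⟩

end UA
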